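/- arXiv:1201.5979 — 2 statements merged into one kernel-verified Lean document; each statement's English description precedes it below -/
import Mathlib

section
/- (Mironov, rank 2, genus g) Let g ≥ 1 be an integer and α ∈ ℂ a nonzero constant. In the algebra of ℂ-linear endomorphisms of ℂ[x], define the operator L = (D² + X³ + α)² + g(g+1)X (an operator of order 4 with polynomial coefficients). Then there exist an ordinary differential operator M of order 4g + 2 with polynomial coefficients, i.e. M = Σ_{j=0}^{4g+2} P_j(X)∘D^j with each P_j ∈ ℂ[x] and P_{4g+2} ≠ 0, and constants a_0, …, a_{2g} ∈ ℂ such that L∘M = M∘L and M² = L^{2g+1} + a_{2g}·L^{2g} + … + a_1·L + a_0. -/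
open Polynomial Finset

/-- The differentiation operator on `ℂ[x]`, as a `ℂ`-linear endomorphism. -/
noncomputable def Dop : Module.End ℂ (Polynomial ℂ) := Polynomial.derivative

/-- The operator of multiplication by `x` on `ℂ[x]`, as a `ℂ`-linear endomorphism. -/
noncomputable def Xop : Module.End ℂ (Polynomial ℂ) := LinearMap.mulLeft ℂ Polynomial.X
section alg
variable {E : Type*} [Ring E] (ρ : ℂ[X][X] →+* E) (δ : E)

/-- normal form of a differential operator of order at most six -/
noncomputable def NF (a b c d e f g : ℂ[X][X]) : E :=
  ρ a + ρ b * δ + ρ c * δ ^ 2 + ρ d * δ ^ 3 + ρ e * δ ^ 4 + ρ f * δ ^ 5 + ρ g * δ ^ 6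

theorem rho_NF (p a b c d e f g : ℂ[X][X]) :
    ρ p * NF ρ δ a b c d e f g
      = NF ρ δ (p * a) (p * b) (p * c) (p * d) (p * e) (p * f) (p * g) := by
  simp only [NF, map_mul, mul_add, mul_assoc]

theorem add_NF (a b c d e f g a' b' c' d' e' f' g' : ℂ[X][X]) :
    NF ρ δ a b c d e f g + NF ρ δ a' b' c' d' e' f' g'
      = NF ρ δ (a + a') (b + b') (c + c') (d + d') (e + e') (f + f') (g + g') := by
  simp only [NF, map_add, add_mul]; abel

theorem sub_NF (a b c d e f g a' b' c' d' e' f' g' : ℂ[X][X]) :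
    NF ρ δ a b c d e f g - NF ρ δ a' b' c' d' e' f' g'
      = NF ρ δ (a - a') (b - b') (c - c') (d - d') (e - e') (f - f') (g - g') := by
  simp only [NF, map_sub, sub_mul]; abel

theorem delta_NF (hδ : ∀ P, δ * ρ P = ρ P * δ + ρ (derivative P)) (a b c d e f : ℂ[X][X]) :
    δ * NF ρ δ a b c d e f 0
      = NF ρ δ (derivative a) (a + derivative b) (b + derivative c) (c + derivative d)
          (d + derivative e) (e + derivative f) f := by
  simp only [NF, map_add, map_zero, zero_mul, add_zero, mul_add, ← mul_assoc, hδ, add_mul]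
  simp only [mul_assoc, ← pow_succ']
  simp only [← pow_two]
  abel

theorem NF_congr {a b c d e f g a' b' c' d' e' f' g' : ℂ[X][X]} (h1 : a = a') (h2 : b = b')
    (h3 : c = c') (h4 : d = d') (h5 : e = e') (h6 : f = f') (h7 : g = g') :
    NF ρ δ a b c d e f g = NF ρ δ a' b' c' d' e' f' g' := by
  subst h1 h2 h3 h4 h5 h6 h7; rfl

theorem mult_NF (a : ℂ[X][X]) : ρ a = NF ρ δ a 0 0 0 0 0 0 := by simp [NF]

theorem L_NF (hδ : ∀ P, δ * ρ P = ρ P * δ + ρ (derivative P)) (V W : ℂ[X][X]) :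
    (δ ^ 2 + ρ V) ^ 2 + ρ W = NF ρ δ (derivative (derivative V) + V ^ 2 + W)
      (2 * derivative V) (2 * V) 0 1 0 0 := by
  have h : (δ ^ 2 + ρ V) = NF ρ δ V 0 1 0 0 0 0 := by simp [NF, add_comm]
  rw [pow_two (δ ^ 2 + ρ V)]
  conv_lhs => enter [1, 2]; rw [h]
  rw [mult_NF ρ δ W, add_mul, pow_two δ, mul_assoc]
  simp only [delta_NF ρ δ hδ, rho_NF, add_NF, map_zero, add_zero, zero_add, derivative_one, mul_zero,
    mul_one]
  apply NF_congr <;> ring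

theorem comm_identity (hδ : ∀ P, δ * ρ P = ρ P * δ + ρ (derivative P)) (V W e Z e1 e2 e3 : ℂ[X][X])
    (hZ : derivative Z = 0)
    (h1 : e1 = derivative e) (h2 : e2 = derivative e1) (h3 : e3 = derivative e2)
    (hODE : derivative (derivative e3) + 4 * V * e3 + 6 * derivative V * e2
      + 2 * derivative (derivative V) * e1 - 4 * W * e1 - 2 * derivative W * e
      + 4 * Z * e1 = 0) (L B : E)
    (hL : L = (δ ^ 2 + ρ V) ^ 2 + ρ W)
    (hB : B = ρ (2 * e) * δ ^ 2 + ρ (-(2 * e1)) * δ + ρ (e2 + 2 * V * e)) :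
    L * B - B * L = (ρ (8 * e1) * δ + ρ (4 * e2)) * (L - ρ Z) := by
  have hBN : B = NF ρ δ (e2 + 2 * V * e) (-(2 * e1)) (2 * e) 0 0 0 0 := by
    rw [hB, NF]; simp only [map_zero, zero_mul, add_zero]; abel
  have hLN := hL.trans (L_NF ρ δ hδ V W)
  have k1 : L * B = (δ * (δ * (δ * (δ * B))) + δ * (δ * (ρ V * B))
     + ρ V * (δ * (δ * B)) + ρ V * (ρ V * B) + ρ W * B) := by
    rw [hL]; noncomm_ring
  have k2 : B * L = ρ (2 * e) * (δ * (δ * L)) + ρ (-(2 * e1)) * (δ * L)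
      + ρ (e2 + 2 * V * e) * L := by
    conv_lhs => rw [hB]
    rw [add_mul, add_mul, pow_two, mul_assoc, mul_assoc, mul_assoc]
  have k3 : (ρ (8 * e1) * δ + ρ (4 * e2)) * (L - ρ Z)
     = ρ (8 * e1) * (δ * L) + ρ (4 * e2) * L
       - NF ρ δ (4 * e2 * Z) (8 * e1 * Z) 0 0 0 0 0 := by
    have : δ * ρ Z = ρ Z * δ := by rw [hδ, hZ]; simp
    simp only [NF, map_zero, zero_mul, add_zero, map_mul, add_mul, mul_sub, mul_assoc, this]
    abel
  have hODE' := congrArg derivative hODE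
  have d2 : derivative (2 : ℂ[X][X]) = 0 := derivative_ofNat 2
  have d4 : derivative (4 : ℂ[X][X]) = 0 := derivative_ofNat 4
  have d6 : derivative (6 : ℂ[X][X]) = 0 := derivative_ofNat 6
  simp only [derivative_add, derivative_sub, derivative_mul, d2, d4, d6, hZ, ← h1, ← h2, ← h3,
    derivative_zero, zero_mul, mul_zero, zero_add, add_zero] at hODE'
  rw [k1, k2, k3, hLN, hBN]
  simp only [delta_NF ρ δ hδ, rho_NF, add_NF, sub_NF, map_zero, add_zero, zero_add,
    derivative_one, mul_zero, mul_one, derivative_add, derivative_mul, derivative_neg, d2,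
    zero_mul, ← h1, ← h2, ← h3, pow_two]
  apply NF_congr
  · linear_combination hODE'
  · linear_combination 2 * hODE
  all_goals ring

theorem sq_identity (hδ : ∀ P, δ * ρ P = ρ P * δ + ρ (derivative P)) (V W e Z e1 e2 e3 : ℂ[X][X])
    (hZ : derivative Z = 0)
    (h1 : e1 = derivative e) (h2 : e2 = derivative e1) (h3 : e3 = derivative e2) (L B : E)
    (hL : L = (δ ^ 2 + ρ V) ^ 2 + ρ W)
    (hB : B = ρ (2 * e) * δ ^ 2 + ρ (-(2 * e1)) * δ + ρ (e2 + 2 * V * e)) :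
    B * B = ρ (4 * e ^ 2) * (L - ρ Z) + ρ (4 * Z * e ^ 2 + 2 * e * derivative e3
      + 4 * derivative V * e * e1 + 8 * V * e * e2 - 2 * e1 * e3 - 4 * V * e1 ^ 2
      + e2 ^ 2 - 4 * W * e ^ 2) := by
  have hBN : B = NF ρ δ (e2 + 2 * V * e) (-(2 * e1)) (2 * e) 0 0 0 0 := by
    rw [hB, NF]; simp only [map_zero, zero_mul, add_zero]; abel
  have hLN := hL.trans (L_NF ρ δ hδ V W)
  have k2 : B * B = ρ (2 * e) * (δ * (δ * B)) + ρ (-(2 * e1)) * (δ * B)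
      + ρ (e2 + 2 * V * e) * B := by
    conv_lhs => enter [1]; rw [hB]
    rw [add_mul, add_mul, pow_two, mul_assoc, mul_assoc, mul_assoc]
  have d2 : derivative (2 : ℂ[X][X]) = 0 := derivative_ofNat 2
  rw [mult_NF ρ δ Z, mult_NF ρ δ (_ - 4 * W * e ^ 2), k2, hLN, hBN]
  simp only [delta_NF ρ δ hδ, rho_NF, add_NF, sub_NF, map_zero, add_zero, zero_add,
    mul_zero, mul_one, derivative_add, derivative_mul, derivative_neg, d2,
    zero_mul, ← h1, ← h2, ← h3]
  apply NF_congr <;> ring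

theorem F_const (V W e Z e1 e2 e3 : ℂ[X][X])
    (hZ : derivative Z = 0)
    (h1 : e1 = derivative e) (h2 : e2 = derivative e1) (h3 : e3 = derivative e2)
    (hODE : derivative (derivative e3) + 4 * V * e3 + 6 * derivative V * e2
      + 2 * derivative (derivative V) * e1 - 4 * W * e1 - 2 * derivative W * e
      + 4 * Z * e1 = 0) :
    derivative (4 * Z * e ^ 2 + 2 * e * derivative e3
      + 4 * derivative V * e * e1 + 8 * V * e * e2 - 2 * e1 * e3 - 4 * V * e1 ^ 2
      + e2 ^ 2 - 4 * W * e ^ 2) = 0 := by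
  have d2 : derivative (2 : ℂ[X][X]) = 0 := derivative_ofNat 2
  have d4 : derivative (4 : ℂ[X][X]) = 0 := derivative_ofNat 4
  have d8 : derivative (8 : ℂ[X][X]) = 0 := derivative_ofNat 8
  simp only [pow_two, derivative_add, derivative_sub, derivative_mul, d2, d4, d8, hZ,
    ← h1, ← h2, ← h3]
  linear_combination 2 * e * hODE

end alg

section recursion

/-- coefficients in `x` of the (unnormalised) solution of the linear ODE -/
noncomputable def Acoef (g : ℕ) (α : ℂ) (j : ℕ) : ℂ[X] :=
  if g < j then 0 else if j = g then 1 else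
    C ((2 * (2 * (j : ℂ) + 1) * ((g : ℂ) * (g + 1) - j * (j + 1)))⁻¹) *
     (C (4 * α * (j + 3) * (j + 2) * (j + 1)) * Acoef g α (j + 3)
      + C (4 * ((j : ℂ) + 1)) * (X * Acoef g α (j + 1))
      + C (((j : ℂ) + 5) * (j + 4) * (j + 3) * (j + 2) * (j + 1)) * Acoef g α (j + 5))
termination_by g - j

theorem Acoef_gt (g : ℕ) (α : ℂ) (j : ℕ) (h : g < j) : Acoef g α j = 0 := by
  rw [Acoef, if_pos h]

theorem kappa_ne (g j : ℕ) (h : j < g) :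
    2 * (2 * (j : ℂ) + 1) * ((g : ℂ) * (g + 1) - j * (j + 1)) ≠ 0 := by
  obtain ⟨k, rfl⟩ := Nat.exists_eq_add_of_lt h
  have : 2 * (2 * (j : ℂ) + 1) * (((j + k + 1 : ℕ) : ℂ) * ((j + k + 1 : ℕ) + 1) - j * (j + 1))
    = ((2 * (2 * j + 1) * ((k + 1) * (2 * j + k + 2)) : ℕ) : ℂ) := by push_cast; ring
  rw [this, Nat.cast_ne_zero]
  positivity

theorem Acoef_rec (g : ℕ) (α : ℂ) (j : ℕ) :
    C (2 * (2 * (j : ℂ) + 1) * ((g : ℂ) * (g + 1) - j * (j + 1))) * Acoef g α j =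
     C (4 * α * (j + 3) * (j + 2) * (j + 1)) * Acoef g α (j + 3)
      + C (4 * ((j : ℂ) + 1)) * (X * Acoef g α (j + 1))
      + C (((j : ℂ) + 5) * (j + 4) * (j + 3) * (j + 2) * (j + 1)) * Acoef g α (j + 5) := by
  rcases lt_trichotomy j g with h | h | h
  · conv_lhs => rw [Acoef, if_neg (by omega), if_neg (by omega)]
    rw [← mul_assoc, ← C_mul, mul_inv_cancel₀ (kappa_ne g j h), C_1, one_mul]
  · subst h
    rw [Acoef_gt _ _ (j + 1) (by omega), Acoef_gt _ _ (j + 3) (by omega),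
      Acoef_gt _ _ (j + 5) (by omega)]
    simp
  · rw [Acoef_gt _ _ j (by omega), Acoef_gt _ _ (j + 1) (by omega),
      Acoef_gt _ _ (j + 3) (by omega), Acoef_gt _ _ (j + 5) (by omega)]
    simp

theorem Acoef_deg (g : ℕ) (α : ℂ) (n : ℕ) : ∀ j, j + n = g →
    (∀ m, n < m → (Acoef g α j).coeff m = 0) ∧ (Acoef g α j).coeff n ≠ 0 := by
  induction n using Nat.strong_induction_on with
  | _ n ih =>
    intro j hj
    have hz : ∀ k, 1 ≤ k → ∀ m, n ≤ m + (k - 1) → n < m + k → (Acoef g α (j + k)).coeff m = 0 := by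
      intro k hk m hm hm2
      by_cases hkn : k ≤ n
      · exact (ih (n - k) (by omega) (j + k) (by omega)).1 m (by omega)
      · rw [Acoef_gt _ _ _ (by omega), coeff_zero]
    rcases Nat.eq_zero_or_pos n with rfl | hn
    · have : Acoef g α j = 1 := by rw [Acoef, if_neg (by omega), if_pos (by omega)]
      rw [this]
      refine ⟨fun m hm => ?_, by simp⟩
      rw [coeff_one, if_neg (by omega)]
    · have hk := kappa_ne g j (by omega)
      have hrec := Acoef_rec g α j
      constructor
      · intro m hm
        have h := congrArg (fun p => coeff p m) hrec
        obtain ⟨m, rfl⟩ : ∃ m', m = m' + 1 := ⟨m - 1, by omega⟩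
        simp only [coeff_add, coeff_C_mul, coeff_X_mul, hz 1 le_rfl m (by omega) (by omega),
          hz 3 (by omega) (m + 1) (by omega) (by omega),
          hz 5 (by omega) (m + 1) (by omega) (by omega), mul_zero, add_zero] at h
        exact (mul_eq_zero.1 h).resolve_left hk
      · obtain ⟨n, rfl⟩ : ∃ m', n = m' + 1 := ⟨n - 1, by omega⟩
        have h := congrArg (fun p => coeff p (n + 1)) hrec
        simp only [coeff_add, coeff_C_mul, coeff_X_mul,
          hz 3 (by omega) (n + 1) (by omega) (by omega),
          hz 5 (by omega) (n + 1) (by omega) (by omega), mul_zero, add_zero, zero_add] at h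
        intro h0
        rw [h0, mul_zero] at h
        have h2 := (ih n (by omega) (j + 1) (by omega)).2
        have h3 : (4 * ((j : ℂ) + 1)) ≠ 0 := mul_ne_zero (by norm_num) (Nat.cast_add_one_ne_zero j)
        exact mul_ne_zero h3 h2 h.symm

theorem exists_e (g : ℕ) (α : ℂ) : ∃ e : ℂ[X][X],
    (∀ j m, g < j + m → (e.coeff j).coeff m = 0) ∧ 2 * (e.coeff 0).coeff g = 1 ∧
    ∀ j : ℕ, C (2 * (2 * (j : ℂ) + 1) * ((g : ℂ) * (g + 1) - j * (j + 1))) * e.coeff j =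
     C (4 * α * (j + 3) * (j + 2) * (j + 1)) * e.coeff (j + 3)
      + C (4 * ((j : ℂ) + 1)) * (X * e.coeff (j + 1))
      + C (((j : ℂ) + 5) * (j + 4) * (j + 3) * (j + 2) * (j + 1)) * e.coeff (j + 5) := by
  set c : ℂ := (2 * (Acoef g α 0).coeff g)⁻¹ with hc
  let e : ℂ[X][X] := ∑ j ∈ range (g + 1), monomial j (C c * Acoef g α j)
  have he : ∀ j, e.coeff j = C c * Acoef g α j := by
    intro j
    simp only [e, finsetSum_coeff, coeff_monomial, Finset.sum_ite_eq', Finset.mem_range]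
    split_ifs with h
    · rfl
    · rw [Acoef_gt _ _ _ (by omega), mul_zero]
  refine ⟨e, ?_, ?_, ?_⟩
  · intro j m h
    rw [he, coeff_C_mul]
    by_cases hj : j ≤ g
    · rw [(Acoef_deg g α (g - j) j (by omega)).1 m (by omega), mul_zero]
    · rw [Acoef_gt _ _ _ (by omega), coeff_zero, mul_zero]
  · have := (Acoef_deg g α g 0 (by omega)).2
    rw [he, coeff_C_mul, hc]
    field_simp
  · intro j
    simp only [he]
    linear_combination C c * Acoef_rec g α j

theorem ode_of_rec (g : ℕ) (α : ℂ) (e : ℂ[X][X]) 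
    (h : ∀ j : ℕ, C (2 * (2 * (j : ℂ) + 1) * ((g : ℂ) * (g + 1) - j * (j + 1))) * e.coeff j =
     C (4 * α * (j + 3) * (j + 2) * (j + 1)) * e.coeff (j + 3)
      + C (4 * ((j : ℂ) + 1)) * (X * e.coeff (j + 1))
      + C (((j : ℂ) + 5) * (j + 4) * (j + 3) * (j + 2) * (j + 1)) * e.coeff (j + 5))
    (V W Z : ℂ[X][X]) (hV : V = X ^ 3 + C (C α)) (hW : W = C (C ((g : ℂ) * (g + 1))) * X)
    (hZ : Z = C X) (e1 e2 e3 : ℂ[X][X])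
    (h1 : e1 = derivative e) (h2 : e2 = derivative e1) (h3 : e3 = derivative e2) :
    derivative (derivative e3) + 4 * V * e3 + 6 * derivative V * e2
      + 2 * derivative (derivative V) * e1 - 4 * W * e1 - 2 * derivative W * e
      + 4 * Z * e1 = 0 := by
  have hV1 : derivative V = C 3 * X ^ 2 := by
    rw [hV]
    simp only [derivative_add, derivative_C, derivative_X_pow, map_ofNat, map_natCast]
    push_cast
    ring
  have hV2 : derivative (derivative V) = C 6 * X := by
    rw [hV1]
    simp only [derivative_C_mul, derivative_X_pow]
    simp only [map_ofNat, map_natCast]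
    push_cast
    ring
  have hW1 : derivative W = C (C ((g : ℂ) * (g + 1))) := by rw [hW]; simp only [derivative_C_mul, derivative_X, mul_one]
  have key : derivative (derivative e3) + C (C (4 * α)) * e3 + C 4 * (X ^ 3 * e3)
     + C 18 * (X ^ 2 * e2) + C 12 * (X ^ 1 * e1) - C (C (4 * ((g : ℂ) * (g + 1)))) * (X ^ 1 * e1)
     - C (C (2 * ((g : ℂ) * (g + 1)))) * e + C (C 4) * (C X * e1) = 0 := by
    ext1 j
    have hj := h j
    rcases j with _ | _ | _ | j
    all_goals
      simp only [coeff_add, coeff_sub, coeff_C_mul, coeff_X_pow_mul', h3, h2, h1, coeff_derivative,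
        coeff_zero]
      norm_num
      simp only [map_mul, map_add, map_natCast, map_ofNat, map_one, map_sub, map_zero] at hj ⊢
      push_cast at hj ⊢
      ring_nf at hj ⊢
      linear_combination -hj
  rw [hV2, hV1, hW1, hV, hW, hZ]
  simp only [map_mul, map_ofNat] at key ⊢
  linear_combination key

end recursion

section ops

/-- the algebra of operators on `ℂ[x]` -/
abbrev Op := Module.End ℂ (Polynomial ℂ)

theorem D_mul (p : ℂ[X]) : Dop * LinearMap.mulLeft ℂ p
    = LinearMap.mulLeft ℂ p * Dop + LinearMap.mulLeft ℂ (derivative p) := by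
  refine LinearMap.ext fun q => ?_
  simp [Dop]
  ring

/-- operators of order `< n` with polynomial coefficients -/
def OrdLt (n : ℕ) (T : Op) : Prop :=
  ∃ P : ℕ → ℂ[X], T = ∑ j ∈ range n, LinearMap.mulLeft ℂ (P j) * Dop ^ j

theorem mulLeft_add' (p q : ℂ[X]) :
    LinearMap.mulLeft ℂ (p + q) = LinearMap.mulLeft ℂ p + LinearMap.mulLeft ℂ q := by
  refine LinearMap.ext fun r => ?_
  simp [add_mul]

theorem mulLeft_mul' (p q : ℂ[X]) :
    LinearMap.mulLeft ℂ (p * q) = (LinearMap.mulLeft ℂ p * LinearMap.mulLeft ℂ q : Op) := by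
  refine LinearMap.ext fun r => ?_
  simp [mul_assoc]

theorem mulLeft_zero' : LinearMap.mulLeft ℂ (0 : ℂ[X]) = 0 := by
  ext1 r; simp

theorem OrdLt.zero (n : ℕ) : OrdLt n 0 := ⟨0, by simp [mulLeft_zero']⟩

theorem OrdLt.add {n : ℕ} {S T : Op} (hS : OrdLt n S) (hT : OrdLt n T) : OrdLt n (S + T) := by
  obtain ⟨P, rfl⟩ := hS
  obtain ⟨Q, rfl⟩ := hT
  exact ⟨P + Q, by simp only [Pi.add_apply, mulLeft_add', add_mul, sum_add_distrib]⟩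

theorem OrdLt.mulL {n : ℕ} {T : Op} (p : ℂ[X]) (hT : OrdLt n T) :
    OrdLt n (LinearMap.mulLeft ℂ p * T) := by
  obtain ⟨P, rfl⟩ := hT
  exact ⟨fun j => p * P j, by simp only [mulLeft_mul', mul_sum, mul_assoc]⟩

theorem OrdLt.sum {ι : Type*} {n : ℕ} (s : Finset ι) (f : ι → Op) (h : ∀ i ∈ s, OrdLt n (f i)) :
    OrdLt n (∑ i ∈ s, f i) := by
  classical
  induction s using Finset.induction_on with
  | empty => simpa using OrdLt.zero n
  | insert a s ha ih =>
    rw [sum_insert ha]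
    exact (h a (by simp)).add (ih fun i hi => h i (by simp [hi]))

theorem OrdLt.term {n j : ℕ} (h : j < n) (p : ℂ[X]) : OrdLt n (LinearMap.mulLeft ℂ p * Dop ^ j) := by
  refine ⟨fun i => if i = j then p else 0, ?_⟩
  rw [Finset.sum_eq_single j]
  · simp
  · intro b _ hb
    simp [hb, mulLeft_zero']
  · intro hj
    exact absurd (mem_range.2 h) hj

theorem OrdLt.pow {n j : ℕ} (h : j < n) : OrdLt n (Dop ^ j) := by
  have := OrdLt.term h 1
  rwa [show LinearMap.mulLeft ℂ (1 : ℂ[X]) = (1 : Op) from LinearMap.ext fun r => by simp, one_mul] at this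

theorem OrdLt.mono {m n : ℕ} (h : m ≤ n) {T : Op} (hT : OrdLt m T) : OrdLt n T := by
  obtain ⟨P, rfl⟩ := hT
  exact OrdLt.sum _ _ fun i hi => OrdLt.term ((mem_range.1 hi).trans_le h) _

theorem OrdLt.D {n : ℕ} {T : Op} (hT : OrdLt n T) : OrdLt (n + 1) (Dop * T) := by
  obtain ⟨P, rfl⟩ := hT
  rw [mul_sum]
  refine OrdLt.sum _ _ fun i hi => ?_
  have hi := mem_range.1 hi
  rw [← mul_assoc, D_mul, add_mul, mul_assoc, ← pow_succ']
  exact (OrdLt.term (by omega) _).add (OrdLt.term (by omega) _)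

theorem OrdLt.Dpow {n : ℕ} {T : Op} (a : ℕ) (hT : OrdLt n T) : OrdLt (n + a) (Dop ^ a * T) := by
  induction a with
  | zero => simpa using hT
  | succ a ih => rw [pow_succ', mul_assoc]; exact ih.D

theorem OrdLt.smul {n : ℕ} {T : Op} (c : ℂ) (hT : OrdLt n T) : OrdLt n (c • T) := by
  have := OrdLt.mulL (C c) hT
  rwa [show (LinearMap.mulLeft ℂ (C c) * T : Op) = c • T by
    refine LinearMap.ext fun q => ?_
    simp [smul_eq_C_mul]] at this

theorem OrdLt.L_sub {n : ℕ} {T L : Op} {V W : ℂ[X]}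
    (hL : L = (Dop ^ 2 + LinearMap.mulLeft ℂ V) ^ 2 + LinearMap.mulLeft ℂ W) (hT : OrdLt n T) :
    OrdLt (n + 3) (L * T - Dop ^ 4 * T) := by
  have : L * T - Dop ^ 4 * T = Dop ^ 2 * (LinearMap.mulLeft ℂ V * T)
      + LinearMap.mulLeft ℂ V * (Dop ^ 2 * T)
      + LinearMap.mulLeft ℂ V * (LinearMap.mulLeft ℂ V * T) + LinearMap.mulLeft ℂ W * T := by
    rw [hL]; noncomm_ring
  rw [this]
  exact OrdLt.add (OrdLt.add (OrdLt.add (((hT.mulL V).Dpow 2).mono (by omega))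
    (((hT.Dpow 2).mulL V).mono (by omega))) (((hT.mulL V).mulL V).mono (by omega)))
    ((hT.mulL W).mono (by omega))

theorem OrdLt.L_pow {L : Op} {V W : ℂ[X]}
    (hL : L = (Dop ^ 2 + LinearMap.mulLeft ℂ V) ^ 2 + LinearMap.mulLeft ℂ W) (k : ℕ) :
    OrdLt (4 * k) (L ^ k - Dop ^ (4 * k)) := by
  induction k with
  | zero => simpa using OrdLt.zero 0
  | succ k ih =>
    have : L ^ (k + 1) - Dop ^ (4 * (k + 1)) = (L * (L ^ k - Dop ^ (4 * k))
        - Dop ^ 4 * (L ^ k - Dop ^ (4 * k))) + Dop ^ 4 * (L ^ k - Dop ^ (4 * k))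
        + (L * Dop ^ (4 * k) - Dop ^ 4 * Dop ^ (4 * k)) := by
      rw [show 4 * (k + 1) = 4 + 4 * k by ring, pow_add Dop, pow_succ' L]
      simp only [mul_sub]; abel
    rw [this]
    exact (((ih.L_sub hL).mono (by omega)).add ((ih.Dpow 4).mono (by omega))).add
      (((OrdLt.pow (Nat.lt_succ_self (4 * k))).L_sub hL).mono (by omega))

theorem OrdLt.D_L_pow {L : Op} {V W : ℂ[X]}
    (hL : L = (Dop ^ 2 + LinearMap.mulLeft ℂ V) ^ 2 + LinearMap.mulLeft ℂ W) (a k : ℕ) :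
    OrdLt (4 * k + a + 1) (Dop ^ a * L ^ k) := by
  have : Dop ^ a * L ^ k = Dop ^ a * (L ^ k - Dop ^ (4 * k)) + Dop ^ (a + 4 * k) := by
    rw [pow_add, mul_sub]; abel
  rw [this]
  exact (((OrdLt.L_pow hL k).Dpow a).mono (by omega)).add (OrdLt.pow (by omega))

section generic

variable {A : Type*} [Ring A] [Algebra ℂ A]

theorem commRX (L : A) (a : ℂ[X]) (y : Module.End ℂ A)
    (h : Commute (LinearMap.mulRight ℂ L) y) :
    Commute ((aeval (LinearMap.mulRight ℂ L : Module.End ℂ A)).toRingHom a) y := by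
  change Commute (aeval (LinearMap.mulRight ℂ L : Module.End ℂ A) a) y
  induction a using Polynomial.induction_on' with
  | add p q hp hq => rw [map_add]; exact hp.add_left hq
  | monomial n c =>
    rw [aeval_monomial]
    exact (Algebra.commute_algebraMap_left c y).mul_left (h.pow_left n)

theorem comm_LR (L K : A) :
    Commute (LinearMap.mulRight ℂ L : Module.End ℂ A) (LinearMap.mulLeft ℂ K) := by
  refine LinearMap.ext fun T => ?_
  simp [mul_assoc]

/-- `rho (∑ p_j(z) x^j)` sends `K` to `∑ x^j * K * p_j(L)` -/
noncomputable def rho (x L : A) : ℂ[X][X] →+* Module.End ℂ A :=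
  eval₂RingHom' (aeval (LinearMap.mulRight ℂ L : Module.End ℂ A)).toRingHom
    (LinearMap.mulLeft ℂ x) (fun a => commRX L a _ (comm_LR L x))

theorem rho_X (x L : A) : rho x L X = LinearMap.mulLeft ℂ x := by simp [rho]

theorem rho_C (x L : A) (p : ℂ[X]) :
    rho x L (C p) = aeval (LinearMap.mulRight ℂ L : Module.End ℂ A) p := by simp [rho]

theorem rho_commute (x L : A) (y : Module.End ℂ A) (h1 : Commute (LinearMap.mulRight ℂ L) y)
    (h2 : Commute (LinearMap.mulLeft ℂ x) y) (P : ℂ[X][X]) : Commute (rho x L P) y := by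
  induction P using Polynomial.induction_on' with
  | add p q hp hq => rw [map_add]; exact hp.add_left hq
  | monomial n c =>
    rw [← C_mul_X_pow_eq_monomial, map_mul, map_pow, rho_X, rho_C]
    exact (commRX L c y h1).mul_left (h2.pow_left n)

theorem rho_delta (x L d : A) (hd : d * x = x * d + 1) (P : ℂ[X][X]) :
    (LinearMap.mulLeft ℂ d : Module.End ℂ A) * rho x L P
      = rho x L P * LinearMap.mulLeft ℂ d + rho x L (derivative P) := by
  have hX : (LinearMap.mulLeft ℂ d : Module.End ℂ A) * LinearMap.mulLeft ℂ x
      = LinearMap.mulLeft ℂ x * LinearMap.mulLeft ℂ d + 1 := by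
    refine LinearMap.ext fun T => ?_
    simp only [Module.End.mul_apply, LinearMap.mulLeft_apply, LinearMap.add_apply,
      Module.End.one_apply, ← mul_assoc, hd, add_mul, one_mul]
  induction P using Polynomial.induction_on with
  | C a =>
    rw [derivative_C, map_zero, add_zero, rho_C]
    exact (commRX L a _ (comm_LR L d)).symm.eq
  | add p q hp hq => rw [map_add, mul_add, hp, hq, derivative_add, map_add, add_mul]; abel
  | monomial n a h =>
    rw [pow_succ, ← mul_assoc, map_mul, ← mul_assoc, h, derivative_mul (f := C a * X ^ n),
      derivative_X, mul_one,
      map_add, map_mul _ (derivative _) X, rho_X, add_mul, mul_assoc, hX, mul_add, mul_one,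
      mul_assoc]
    abel

theorem rho_C_apply (x L : A) (p : ℂ[X]) (K : A) : rho x L (C p) K = K * aeval L p := by
  rw [rho_C]
  induction p using Polynomial.induction_on' with
  | add p q hp hq => rw [map_add, LinearMap.add_apply, hp, hq, map_add, mul_add]
  | monomial n c =>
    simp [aeval_monomial, LinearMap.pow_mulRight, ← Algebra.smul_def]

theorem rho_apply (x L : A) (P : ℂ[X][X]) (K : A) :
    rho x L P K = ∑ j ∈ range (P.natDegree + 1), x ^ j * (K * aeval L (P.coeff j)) := by
  conv_lhs => rw [P.as_sum_range_C_mul_X_pow]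
  rw [map_sum, LinearMap.sum_apply]
  refine sum_congr rfl fun j _ => ?_
  rw [mul_comm, map_mul, map_pow, rho_X, Module.End.mul_apply, rho_C_apply,
    LinearMap.pow_mulLeft, LinearMap.mulLeft_apply]

theorem rho_map_apply (x L : A) (p : ℂ[X]) (K : A) :
    rho x L (p.map C) K = aeval x p * K := by
  induction p using Polynomial.induction_on' with
  | add p q hp hq => rw [Polynomial.map_add, map_add, LinearMap.add_apply, hp, hq,
      map_add, add_mul]
  | monomial n c =>
    rw [← C_mul_X_pow_eq_monomial, Polynomial.map_mul, Polynomial.map_pow, map_X, map_C, mul_comm,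
      map_mul, Module.End.mul_apply, rho_C_apply, map_pow, rho_X, LinearMap.pow_mulLeft,
      LinearMap.mulLeft_apply, mul_comm (C c), map_mul, aeval_C, aeval_C, map_pow, aeval_X,
      ← Algebra.commutes, mul_assoc]

theorem F_top (g : ℕ) (α : ℂ) (a : ℕ → ℂ[X]) (ha : ∀ j m, g < m → (a j).coeff m = 0)
    (h0 : 2 * (a 0).coeff g = 1) (F : ℂ[X])
    (hF : F = 4 * X * a 0 ^ 2 + 48 * a 0 * a 4 + 16 * C α * a 0 * a 2 - 12 * a 1 * a 3
      - 4 * C α * a 1 ^ 2 + 4 * a 2 ^ 2) :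
    F.natDegree ≤ 2 * g + 1 ∧ F.coeff (2 * g + 1) = 1 := by
  have hd : ∀ j, (a j).natDegree ≤ g := fun j =>
    natDegree_le_iff_coeff_eq_zero.2 fun k hk => ha j k hk
  have hm : ∀ i j m, 2 * g < m → (a i * a j).coeff m = 0 := fun i j m h =>
    coeff_eq_zero_of_natDegree_lt (lt_of_le_of_lt (natDegree_mul_le_of_le (hd i) (hd j)) (by omega))
  have hF' : F = C 4 * (X * (a 0 * a 0)) + C 48 * (a 0 * a 4) + C (16 * α) * (a 0 * a 2)
      - C 12 * (a 1 * a 3) - C (4 * α) * (a 1 * a 1) + C 4 * (a 2 * a 2) := by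
    rw [hF]; simp only [map_mul, map_ofNat]; ring
  have hc : ∀ m, 2 * g ≤ m → F.coeff (m + 1) = 4 * (a 0 * a 0).coeff m := by
    intro m h
    rw [hF']
    simp only [coeff_add, coeff_sub, coeff_C_mul, coeff_X_mul]
    simp only [hm _ _ (m + 1) (by omega), mul_zero, add_zero, sub_zero]
  constructor
  · refine natDegree_le_iff_coeff_eq_zero.2 fun k hk => ?_
    obtain ⟨k, rfl⟩ : ∃ m, k = m + 1 := ⟨k - 1, by omega⟩
    rw [hc k (by omega), hm _ _ _ (by omega), mul_zero]
  · rw [hc _ le_rfl, two_mul g, coeff_mul_add_eq_of_natDegree_le (hd 0) (hd 0)]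
    linear_combination (2 * (a 0).coeff g + 1) * h0

theorem main_generic (g : ℕ) (α : ℂ) (d x L : A) (hdx : d * x = x * d + 1) (V W : ℂ[X])
    (hL : L = (d ^ 2 + aeval x V) ^ 2 + aeval x W) (e e1 e2 e3 V' W' : ℂ[X][X])
    (hdeg : ∀ j m, g < j + m → (e.coeff j).coeff m = 0) (hlead : 2 * (e.coeff 0).coeff g = 1)
    (h1 : e1 = derivative e) (h2 : e2 = derivative e1) (h3 : e3 = derivative e2)
    (hV' : V' = V.map C) (hW' : W' = W.map C) (hV2 : V' = X ^ 3 + C (C α))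
    (hW2 : W' = C (C ((g : ℂ) * (g + 1))) * X)
    (hODE : derivative (derivative e3) + 4 * V' * e3 + 6 * derivative V' * e2
      + 2 * derivative (derivative V') * e1 - 4 * W' * e1 - 2 * derivative W' * e
      + 4 * C X * e1 = 0) :
    ∃ (M : A) (a : ℕ → ℂ), L * M = M * L ∧
      M ^ 2 = L ^ (2 * g + 1) + ∑ i ∈ Finset.range (2 * g + 1), a i • L ^ i ∧
      M = rho x L (2 * e - C (X ^ g)) (d ^ 2) + d ^ 2 * L ^ g
        + rho x L (-(2 * e1)) (d ^ 1) + (rho x L e2 (d ^ 0)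
        + aeval x (2 * V) * rho x L e (d ^ 0)) := by
  have hZ : derivative (C X : ℂ[X][X]) = 0 := derivative_C
  obtain ⟨δ, hδ⟩ : ∃ δ : Module.End ℂ A, δ = LinearMap.mulLeft ℂ d := ⟨_, rfl⟩
  obtain ⟨ℓ, hℓ⟩ : ∃ ℓ : Module.End ℂ A, ℓ = LinearMap.mulLeft ℂ L := ⟨_, rfl⟩
  have hρδ : ∀ P, δ * rho x L P = rho x L P * δ + rho x L (derivative P) := by
    rw [hδ]; exact rho_delta x L d hdx
  have hLL : ℓ = (δ ^ 2 + rho x L V') ^ 2 + rho x L W' := by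
    refine LinearMap.ext fun T => ?_
    rw [hℓ, hδ, LinearMap.mulLeft_apply, hV', hW']
    simp only [LinearMap.add_apply, pow_two, Module.End.mul_apply, rho_map_apply,
      LinearMap.mulLeft_apply]
    conv_lhs => rw [hL]
    noncomm_ring
  obtain ⟨B, hB⟩ : ∃ B : Module.End ℂ A, B = rho x L (2 * e) * δ ^ 2
      + rho x L (-(2 * e1)) * δ + rho x L (e2 + 2 * V' * e) := ⟨_, rfl⟩
  have c1 := comm_identity (rho x L) δ hρδ V' W' e (C X) e1 e2 e3 hZ h1 h2 h3 hODE ℓ B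
    hLL hB
  have c2 := sq_identity (rho x L) δ hρδ V' W' e (C X) e1 e2 e3 hZ h1 h2 h3 ℓ B hLL hB
  have c3 := F_const V' W' e (C X) e1 e2 e3 hZ h1 h2 h3 hODE
  obtain ⟨F, hF⟩ : ∃ F, F = 4 * C X * e ^ 2 + 2 * e * derivative e3
      + 4 * derivative V' * e * e1 + 8 * V' * e * e2 - 2 * e1 * e3 - 4 * V' * e1 ^ 2
      + e2 ^ 2 - 4 * W' * e ^ 2 := ⟨_, rfl⟩
  rw [← hF] at c2 c3
  have hFC : F = C (F.coeff 0) :=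
    eq_C_of_natDegree_eq_zero (natDegree_eq_zero_of_derivative_eq_zero c3)
  have hz1 : (ℓ - rho x L (C X)) 1 = 0 := by
    rw [hℓ, LinearMap.sub_apply, rho_C_apply, aeval_X, LinearMap.mulLeft_apply, mul_one, one_mul,
      sub_self]
  have hBK : ∀ K : A, L * K = K * L → B K = B 1 * K := by
    intro K hK
    have hc : Commute B (LinearMap.mulRight ℂ K) := by
      have hr := rho_commute x L (LinearMap.mulRight ℂ K) (by
        refine LinearMap.ext fun T => ?_
        simp only [Module.End.mul_apply, LinearMap.mulRight_apply, mul_assoc, hK])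
        (comm_LR K x).symm
      have hd : Commute δ (LinearMap.mulRight ℂ K) := by
        rw [hδ]; exact (comm_LR K d).symm
      rw [hB]
      exact (((hr _).mul_left (hd.pow_left 2)).add_left ((hr _).mul_left hd)).add_left (hr _)
    have := LinearMap.congr_fun hc.eq 1
    simpa only [Module.End.mul_apply, LinearMap.mulRight_apply, one_mul] using this
  have hcomm : L * B 1 = B 1 * L := by
    have := LinearMap.congr_fun c1 1
    rw [Module.End.mul_apply (_ + _), hz1, map_zero, LinearMap.sub_apply, Module.End.mul_apply,
      Module.End.mul_apply, hℓ, LinearMap.mulLeft_apply, LinearMap.mulLeft_apply, mul_one,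
      hBK L rfl, sub_eq_zero] at this
    exact this
  have hsq : B 1 ^ 2 = aeval L (F.coeff 0) := by
    have := LinearMap.congr_fun c2 1
    rw [LinearMap.add_apply, Module.End.mul_apply (rho x L _), hz1, map_zero, zero_add, hFC,
      rho_C_apply, one_mul, Module.End.mul_apply, hBK _ hcomm] at this
    rw [pow_two, this]
  have hF0 := F_top g α e.coeff (fun j m h => hdeg j m (by omega)) hlead (F.coeff 0) (by
    rw [hF, hV2, hW2, h3, h2, h1]
    simp [mul_coeff_zero, coeff_derivative, pow_two]
    ring)
  refine ⟨B 1, (F.coeff 0).coeff, hcomm, ?_, ?_⟩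
  · rw [hsq, aeval_eq_sum_range' (Nat.lt_succ_of_le hF0.1), sum_range_succ, hF0.2, one_smul,
      add_comm]
  · have hv : 2 * V' * e = (2 * V).map C * e := by
      rw [hV', Polynomial.map_mul, Polynomial.map_ofNat]
    rw [hB, hδ, hv, map_sub, LinearMap.sub_apply, rho_C_apply, map_pow (aeval L), aeval_X, map_add,
      map_mul (rho x L) (Polynomial.map C (2 * V)) e]
    simp only [LinearMap.add_apply, Module.End.mul_apply, rho_map_apply, pow_two,
      LinearMap.mulLeft_apply, mul_one, pow_one, pow_zero]
    abel

end generic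

/-- the value `∑ X^j ∘ K ∘ p_j(L)` -/
noncomputable def ev (L : Op) (P : ℂ[X][X]) (K : Op) : Op := rho Xop L P K

theorem Xop_eq : Xop = LinearMap.mulLeft ℂ (X : ℂ[X]) := rfl

theorem aeval_Xop (p : ℂ[X]) : aeval Xop p = LinearMap.mulLeft ℂ p := by
  induction p using Polynomial.induction_on' with
  | add p q hp hq => rw [map_add, hp, hq, mulLeft_add']
  | monomial n c =>
    rw [aeval_monomial, Xop_eq, LinearMap.pow_mulLeft, ← Algebra.smul_def]
    refine LinearMap.ext fun q => ?_
    simp [← C_mul_X_pow_eq_monomial, smul_eq_C_mul, mul_assoc]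

theorem rho_ord {L : Op} {V W : ℂ[X]}
    (hL : L = (Dop ^ 2 + LinearMap.mulLeft ℂ V) ^ 2 + LinearMap.mulLeft ℂ W) (a m : ℕ)
    (P : ℂ[X][X]) (hP : ∀ j k, m < k → (P.coeff j).coeff k = 0) :
    OrdLt (4 * m + a + 1) (ev L P (Dop ^ a)) := by
  rw [ev, rho_apply]
  refine OrdLt.sum _ _ fun j _ => ?_
  rw [Xop_eq, LinearMap.pow_mulLeft]
  refine OrdLt.mulL _ ?_
  have : (P.coeff j).natDegree < m + 1 :=
    Nat.lt_succ_of_le (natDegree_le_iff_coeff_eq_zero.2 fun k hk => hP j k hk)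
  rw [aeval_eq_sum_range' this, mul_sum]
  refine OrdLt.sum _ _ fun k hk => ?_
  rw [mul_smul_comm]
  have := mem_range.1 hk
  exact ((OrdLt.D_L_pow hL a k).mono (by omega)).smul _

end ops

section final

theorem main_aux (g : ℕ) (hg : 1 ≤ g) (α : ℂ) (L : Op) (V W : ℂ[X])
    (hV : V = X ^ 3 + C α) (hW : W = C ((g : ℂ) * (g + 1)) * X)
    (hL : L = (Dop ^ 2 + LinearMap.mulLeft ℂ V) ^ 2 + LinearMap.mulLeft ℂ W) :
    ∃ (M : Op) (a : ℕ → ℂ), OrdLt (4 * g + 2) (M - Dop ^ (4 * g + 2)) ∧ L * M = M * L ∧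
      M ^ 2 = L ^ (2 * g + 1) + ∑ i ∈ Finset.range (2 * g + 1), a i • L ^ i := by
  obtain ⟨e, hdeg, hlead, hrec⟩ := exists_e g α
  obtain ⟨e1, h1⟩ : ∃ e1, e1 = derivative e := ⟨_, rfl⟩
  obtain ⟨e2, h2⟩ : ∃ e2, e2 = derivative e1 := ⟨_, rfl⟩
  obtain ⟨e3, h3⟩ : ∃ e3, e3 = derivative e2 := ⟨_, rfl⟩
  obtain ⟨V', hV'⟩ : ∃ V' : ℂ[X][X], V' = V.map C := ⟨_, rfl⟩
  obtain ⟨W', hW'⟩ : ∃ W' : ℂ[X][X], W' = W.map C := ⟨_, rfl⟩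
  have hV2 : V' = X ^ 3 + C (C α) := by simp [hV', hV]
  have hW2 : W' = C (C ((g : ℂ) * (g + 1))) * X := by
    rw [hW', hW, Polynomial.map_mul, map_C, map_X]
  have hODE := ode_of_rec g α e hrec V' W' (C X) hV2 hW2 rfl e1 e2 e3 h1 h2 h3
  obtain ⟨M, a, hcomm, hsq, hM⟩ := main_generic g α Dop Xop L (by
    have := D_mul X
    rwa [derivative_X, ← Xop_eq, show LinearMap.mulLeft ℂ (1 : ℂ[X]) = (1 : Op) from
      LinearMap.ext fun r => by simp] at this) V W (by rw [aeval_Xop, aeval_Xop]; exact hL)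
    e e1 e2 e3 V' W' hdeg hlead h1 h2 h3 hV' hW' hV2 hW2 hODE
  refine ⟨M, a, ?_, hcomm, hsq⟩
  rw [aeval_Xop] at hM
  simp only [← ev.eq_1] at hM
  have hsplit : M - Dop ^ (4 * g + 2) = ev L (2 * e - C (X ^ g)) (Dop ^ 2)
      + Dop ^ 2 * (L ^ g - Dop ^ (4 * g))
      + ev L (-(2 * e1)) (Dop ^ 1) + (ev L e2 (Dop ^ 0)
      + LinearMap.mulLeft ℂ (2 * V) * ev L e (Dop ^ 0)) := by
    rw [hM, add_comm (4 * g) 2, pow_add, mul_sub]; abel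
  have hde : ∀ (p : ℂ[X][X]), (∀ j m, g < m → (p.coeff j).coeff m = 0) →
      ∀ j m, g < m → ((derivative p).coeff j).coeff m = 0 := by
    intro p hp j m h
    rw [coeff_derivative, ← Nat.cast_succ, coeff_mul_natCast, hp _ _ h, zero_mul]
  have d0 : ∀ j m, g < m → (e.coeff j).coeff m = 0 := fun j m h => hdeg j m (by omega)
  have d1 := hde e d0
  rw [← h1] at d1
  have d2 := hde e1 d1
  rw [← h2] at d2
  have two (p : ℂ[X][X]) (j m : ℕ) : ((2 * p).coeff j).coeff m = 2 * (p.coeff j).coeff m := by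
    rw [two_mul, coeff_add, coeff_add, two_mul]
  rw [hsplit]
  refine ((OrdLt.add ?_ ?_).add ?_).add (OrdLt.add ?_ ?_)
  · refine (rho_ord hL 2 (g - 1) _ ?_).mono (by omega)
    intro j k hk
    rw [coeff_sub, coeff_sub, two]
    rcases j with _ | j
    · rw [coeff_C_zero, coeff_X_pow]
      split_ifs with hkg
      · rw [hkg, hlead, sub_self]
      · rw [hdeg 0 k (by omega), mul_zero, sub_zero]
    · rw [coeff_C_succ, hdeg _ k (by omega), mul_zero, coeff_zero, sub_zero]
  · exact (OrdLt.L_pow hL g).Dpow 2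
  · refine rho_ord hL 1 g _ ?_
    intro j k hk
    rw [coeff_neg, coeff_neg, two, d1 _ _ hk, mul_zero, neg_zero]
  · exact (rho_ord hL 0 g _ d2).mono (by omega)
  · exact ((rho_ord hL 0 g _ d0).mono (by omega)).mulL _

end final

/-- Mironov's commuting operators of rank 2 and genus `g`: for
`L = (D² + X³ + α)² + g(g+1)X` there is an operator `M` of order `4g + 2` with
polynomial coefficients and constants `a₀, …, a_{2g}` such that `L∘M = M∘L` and
`M² = L^{2g+1} + a_{2g}·L^{2g} + … + a₁·L + a₀`. -/
theorem mironov_rank2 (g : ℕ) (hg : 1 ≤ g) (α : ℂ) (hα : α ≠ 0) :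
    letI one : Module.End ℂ (Polynomial ℂ) := 1
    letI L : Module.End ℂ (Polynomial ℂ) :=
      (Dop ^ 2 + Xop ^ 3 + α • one) ^ 2 + ((g : ℂ) * ((g : ℂ) + 1)) • Xop
    ∃ (M : Module.End ℂ (Polynomial ℂ)) (P : ℕ → Polynomial ℂ) (a : ℕ → ℂ),
      M = ∑ j ∈ Finset.range (4 * g + 2 + 1), LinearMap.mulLeft ℂ (P j) * Dop ^ j ∧
      P (4 * g + 2) ≠ 0 ∧
      L * M = M * L ∧
      M ^ 2 = L ^ (2 * g + 1) + ∑ i ∈ Finset.range (2 * g + 1), a i • L ^ i := by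
  obtain ⟨L, hL0⟩ : ∃ L : Op, L = (Dop ^ 2 + Xop ^ 3 + α • (1 : Op)) ^ 2
      + ((g : ℂ) * ((g : ℂ) + 1)) • Xop := ⟨_, rfl⟩
  have hL : L = (Dop ^ 2 + LinearMap.mulLeft ℂ (X ^ 3 + C α : ℂ[X])) ^ 2
      + LinearMap.mulLeft ℂ (C ((g : ℂ) * (g + 1)) * X : ℂ[X]) := by
    have hC : ∀ c : ℂ, LinearMap.mulLeft ℂ (C c : ℂ[X]) = c • (1 : Op) := fun c =>
      LinearMap.ext fun q => by simp [smul_eq_C_mul]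
    rw [hL0, mulLeft_add', mulLeft_mul', hC, hC, ← LinearMap.pow_mulLeft, ← Xop_eq, smul_mul_assoc,
      one_mul, ← add_assoc]
  obtain ⟨M, a, ⟨P, hP⟩, hc, hsq⟩ := main_aux g hg α L _ _ rfl rfl hL
  rw [← hL0]
  refine ⟨M, fun j => if j = 4 * g + 2 then 1 else P j, a, ?_, by simp, hc, hsq⟩
  beta_reduce
  rw [sum_range_succ, if_pos rfl, show LinearMap.mulLeft ℂ (1 : ℂ[X]) = (1 : Op) from
    LinearMap.ext fun r => by simp, one_mul, ← sub_eq_iff_eq_add, hP]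
  refine sum_congr rfl fun j hj => ?_
  rw [if_neg (mem_range.1 hj).ne]
end

section
/- (Theorem 1) Let k > 1 and g ≥ 1 be integers and α ∈ ℂ a nonzero constant. In the algebra of ℂ-linear endomorphisms of ℂ[x], define the operator L = (D^{2k} − 2X∘D^{k} − k·D^{k−1} + D³ + X² + α)² + g(g+1)·D, an operator of order 4k with polynomial coefficients. Then there exist an ordinary differential operator M of order 4kg + 2k with polynomial coefficients, i.e. M = Σ_{j=0}^{4kg+2k} P_j(X)∘D^j with each P_j ∈ ℂ[x] and P_{4kg+2k} ≠ 0, and constants a_0, …, a_{2g} ∈ ℂ such that L∘M = M∘L and M² = L^{2g+1} + a_{2g}·L^{2g} + … + a_1·L + a_0. -/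
open Polynomial Finset

/-- Coefficient ring: polynomials in `u` over polynomials in the spectral parameter. -/
abbrev RR := Polynomial (Polynomial ℂ)

noncomputable def TT {A : Type*} [Ring A] (φ : RR →+* A) (d : A)
    (f0 f1 f2 f3 f4 f5 f6 : RR) : A :=
  φ f0 + φ f1 * d + φ f2 * d ^ 2 + φ f3 * d ^ 3 + φ f4 * d ^ 4 + φ f5 * d ^ 5 + φ f6 * d ^ 6

theorem TT_d {A : Type*} [Ring A] (φ : RR →+* A) (d : A)
    (hd : ∀ f : RR, d * φ f = φ f * d + φ (derivative f)) (f0 f1 f2 f3 f4 f5 : RR) :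
    d * TT φ d f0 f1 f2 f3 f4 f5 0 =
      TT φ d (derivative f0) (f0 + derivative f1) (f1 + derivative f2) (f2 + derivative f3)
        (f3 + derivative f4) (f4 + derivative f5) f5 := by
  unfold TT
  simp only [mul_add, ← mul_assoc, hd, map_add, map_zero, zero_mul, mul_zero, add_mul, pow_succ,
    pow_zero, one_mul]
  abel

theorem TT_phi {A : Type*} [Ring A] (φ : RR →+* A) (d : A)
    (f f0 f1 f2 f3 f4 f5 f6 : RR) :
    φ f * TT φ d f0 f1 f2 f3 f4 f5 f6 =
      TT φ d (f * f0) (f * f1) (f * f2) (f * f3) (f * f4) (f * f5) (f * f6) := by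
  unfold TT
  simp only [mul_add, ← mul_assoc, map_mul]

theorem TT_add {A : Type*} [Ring A] (φ : RR →+* A) (d : A)
    (f0 f1 f2 f3 f4 f5 f6 g0 g1 g2 g3 g4 g5 g6 : RR) :
    TT φ d f0 f1 f2 f3 f4 f5 f6 + TT φ d g0 g1 g2 g3 g4 g5 g6 =
      TT φ d (f0 + g0) (f1 + g1) (f2 + g2) (f3 + g3) (f4 + g4) (f5 + g5) (f6 + g6) := by
  unfold TT
  simp only [map_add, add_mul]
  abel

theorem TT_congr {A : Type*} [Ring A] (φ : RR →+* A) (d : A)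
    {f0 f1 f2 f3 f4 f5 f6 g0 g1 g2 g3 g4 g5 g6 : RR} (h0 : f0 = g0) (h1 : f1 = g1) (h2 : f2 = g2)
    (h3 : f3 = g3) (h4 : f4 = g4) (h5 : f5 = g5) (h6 : f6 = g6) :
    TT φ d f0 f1 f2 f3 f4 f5 f6 = TT φ d g0 g1 g2 g3 g4 g5 g6 := by
  subst h0 h1 h2 h3 h4 h5 h6; rfl

/-- The commutation identity. -/
theorem key_comm {A : Type*} [Ring A] (φ : RR →+* A) (d : A)
    (hd : ∀ f : RR, d * φ f = φ f * d + φ (derivative f)) (P V W : RR) (z : RR)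
    (hz : derivative z = 0)
    (hE : derivative (derivative (derivative (derivative (derivative P))))
      + 4 * V * derivative (derivative (derivative P)) + 6 * derivative V * derivative (derivative P)
      + 2 * derivative (derivative V) * derivative P + 4 * (z - W) * derivative P
      - 2 * P * derivative W = 0)
    (L B : A) (hL : L = (d ^ 2 + φ V) ^ 2 + φ W)
    (hB : B = φ (2 * P) * (d ^ 2 + φ V) - φ (2 * derivative P) * d + φ (derivative (derivative P))) :
    L * B - B * L = (φ (8 * derivative P) * d + φ (4 * derivative (derivative P))) * (L - φ z) := by
  have hE' := congrArg derivative hE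
  simp only [derivative_mul, derivative_add, derivative_sub, derivative_ofNat, hz,
    derivative_zero] at hE'
  have hLT : L = TT φ d (V * V + derivative (derivative V) + W) (2 * derivative V) (2 * V) 0 1 0 0 := by
    have e1 : d ^ 2 + φ V = TT φ d V 0 1 0 0 0 0 := by simp [TT]; abel
    have e2 : L = d * (d * (TT φ d V 0 1 0 0 0 0)) + φ V * (TT φ d V 0 1 0 0 0 0)
        + TT φ d W 0 0 0 0 0 0 := by
      rw [hL, ← e1]; simp only [TT, map_zero]; noncomm_ring
    rw [e2, TT_d φ d hd, TT_d φ d hd, TT_phi, TT_add, TT_add]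
    apply TT_congr <;> simp <;> ring
  have hBT : B = TT φ d (2 * P * V + derivative (derivative P)) (-(2 * derivative P)) (2 * P) 0 0 0 0 := by
    rw [hB]; simp only [TT, map_zero, map_add, map_mul, map_neg]; noncomm_ring
  have hLB : L * B = d * (d * (d * (d * B))) + φ (2 * V) * (d * (d * B)) + φ (2 * derivative V) * (d * B)
      + φ (V * V + derivative (derivative V) + W) * B := by
    nth_rw 1 [hLT]
    simp only [TT, map_zero, map_one]; noncomm_ring
  have hBL : ∀ Y, B * Y = φ (2 * P) * (d * (d * Y)) + φ (-(2 * derivative P)) * (d * Y)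
      + φ (2 * P * V + derivative (derivative P)) * Y := by
    intro Y
    rw [hBT]
    simp only [TT, map_zero, map_one]; noncomm_ring
  have hLz : L - φ z = TT φ d (V * V + derivative (derivative V) + W - z) (2 * derivative V) (2 * V) 0 1 0 0 := by
    rw [hLT]; simp only [TT, map_sub, map_add]; abel
  have hCY : ∀ Y, (φ (8 * derivative P) * d + φ (4 * derivative (derivative P))) * Y =
      φ (8 * derivative P) * (d * Y) + φ (4 * derivative (derivative P)) * Y := by
    intro Y; rw [add_mul, mul_assoc]
  rw [sub_eq_iff_eq_add, hLB, hBL, hCY, hBT, hLz, hLT]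
  simp only [TT_d φ d hd, TT_phi, TT_add, derivative_mul, derivative_add, derivative_sub,
    derivative_ofNat, derivative_neg, neg_zero, derivative_one, derivative_zero, hz, add_zero, mul_zero, zero_add, zero_mul]
  apply TT_congr
  · linear_combination hE'
  · linear_combination 2 * hE
  all_goals ring

/-- The square identity. -/
theorem key_sq {A : Type*} [Ring A] (φ : RR →+* A) (d : A)
    (hd : ∀ f : RR, d * φ f = φ f * d + φ (derivative f)) (P V W : RR) (z : RR)
    (L B : A) (hL : L = (d ^ 2 + φ V) ^ 2 + φ W)
    (hB : B = φ (2 * P) * (d ^ 2 + φ V) - φ (2 * derivative P) * d + φ (derivative (derivative P))) :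
    B * B = φ (4 * P ^ 2) * (L - φ z) + φ (4 * (z - W) * P ^ 2
      + 2 * P * (4 * derivative (derivative P) * V + 2 * derivative P * derivative V
        + derivative (derivative (derivative (derivative P))))
      - 4 * V * derivative P ^ 2 - 2 * derivative P * derivative (derivative (derivative P))
      + derivative (derivative P) ^ 2) := by
  have hLT : L = TT φ d (V * V + derivative (derivative V) + W) (2 * derivative V) (2 * V) 0 1 0 0 := by
    have e1 : d ^ 2 + φ V = TT φ d V 0 1 0 0 0 0 := by simp [TT]; abel
    have e2 : L = d * (d * (TT φ d V 0 1 0 0 0 0)) + φ V * (TT φ d V 0 1 0 0 0 0)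
        + TT φ d W 0 0 0 0 0 0 := by
      rw [hL, ← e1]; simp only [TT, map_zero]; noncomm_ring
    rw [e2, TT_d φ d hd, TT_d φ d hd, TT_phi, TT_add, TT_add]
    apply TT_congr <;> simp <;> ring
  have hBT : B = TT φ d (2 * P * V + derivative (derivative P)) (-(2 * derivative P)) (2 * P) 0 0 0 0 := by
    rw [hB]; simp only [TT, map_zero, map_add, map_mul, map_neg]; noncomm_ring
  have hBL : ∀ Y, B * Y = φ (2 * P) * (d * (d * Y)) + φ (-(2 * derivative P)) * (d * Y)
      + φ (2 * P * V + derivative (derivative P)) * Y := by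
    intro Y
    rw [hBT]
    simp only [TT, map_zero, map_one]; noncomm_ring
  have hLz : L - φ z = TT φ d (V * V + derivative (derivative V) + W - z) (2 * derivative V) (2 * V) 0 1 0 0 := by
    rw [hLT]; simp only [TT, map_sub, map_add]; abel
  have hF : ∀ f, φ f = TT φ d f 0 0 0 0 0 0 := by
    intro f; simp [TT]
  rw [hBL, hBT, hLz, hF (_ - _ + _)]
  simp only [TT_d φ d hd, TT_phi, TT_add, derivative_mul, derivative_add, derivative_sub,
    derivative_ofNat, derivative_neg, neg_zero, derivative_one, derivative_zero, add_zero, mul_zero, zero_add, zero_mul]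
  apply TT_congr <;> ring

/-- The recursion for the coefficients. -/
def RecAt (g : ℕ) (α : ℂ) (c : ℕ → ℂ[X]) (m : ℕ) : Prop :=
  C (2 * (2 * (m : ℂ) + 1) * ((m : ℂ) * (m + 1) - g * (g + 1))) * c m
    + C (4 * ((m : ℂ) + 1)) * (X * c (m + 1))
    + C (4 * α * (((m : ℂ) + 1) * (m + 2) * (m + 3))) * c (m + 3)
    + C (((m : ℂ) + 1) * (m + 2) * (m + 3) * (m + 4) * (m + 5)) * c (m + 5) = 0

theorem exists_coeffs_aux (g : ℕ) (α : ℂ) (n : ℕ) (hn : n ≤ g) :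
    ∃ c : ℕ → ℂ[X], (∀ m, g - n ≤ m → RecAt g α c m) ∧
      (∀ j i, g < i + j → (c j).coeff i = 0) ∧
      (∀ j, g - n ≤ j → j ≤ g → (c j).coeff (g - j) ≠ 0) := by
  induction n with
  | zero =>
    refine ⟨fun j => if j = g then 1 else 0, ?_, ?_, ?_⟩
    · intro m hm
      have h1 : m + 1 ≠ g := by omega
      have h3 : m + 3 ≠ g := by omega
      have h5 : m + 5 ≠ g := by omega
      unfold RecAt
      by_cases h : m = g
      · subst h; simp
      · simp [h, h1, h3, h5]
    · intro j i hij
      by_cases h : j = g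
      · subst h
        simp [coeff_one]; omega
      · simp [h]
    · intro j h1 h2
      have : j = g := by omega
      subst this; simp
  | succ n ih =>
    obtain ⟨c, hrec, hdeg, hlead⟩ := ih (by omega)
    obtain ⟨m, hm⟩ : ∃ m, g = m + n + 1 := ⟨g - n - 1, by omega⟩
    have hK : 2 * (2 * (m : ℂ) + 1) * ((m : ℂ) * (m + 1) - g * (g + 1)) ≠ 0 := by
      have e : 2 * (2 * (m : ℂ) + 1) * ((m : ℂ) * (m + 1) - g * (g + 1))
          = - ((2 * (2 * m + 1) * ((n + 1) * (2 * m + n + 2)) : ℕ) : ℂ) := by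
        rw [hm]; push_cast; ring
      rw [e, neg_ne_zero, Nat.cast_ne_zero]
      positivity
    set K := 2 * (2 * (m : ℂ) + 1) * ((m : ℂ) * (m + 1) - g * (g + 1)) with hKdef
    set y : ℂ[X] := C (4 * ((m : ℂ) + 1)) * (X * c (m + 1))
      + C (4 * α * (((m : ℂ) + 1) * (m + 2) * (m + 3))) * c (m + 3)
      + C (((m : ℂ) + 1) * (m + 2) * (m + 3) * (m + 4) * (m + 5)) * c (m + 5) with hy
    refine ⟨Function.update c m (C (-K⁻¹) * y), ?_, ?_, ?_⟩
    · intro m' hm'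
      by_cases h : m' = m
      · subst h
        unfold RecAt
        rw [Function.update_self, Function.update_of_ne (by omega), Function.update_of_ne (by omega),
          Function.update_of_ne (by omega), ← hKdef, ← mul_assoc, ← C_mul, add_assoc, add_assoc]
        rw [show K * -K⁻¹ = -1 by field_simp, hy]
        simp only [C_neg, C_1]
        ring
      · have := hrec m' (by omega)
        unfold RecAt at this ⊢
        rwa [Function.update_of_ne (by omega), Function.update_of_ne (by omega),
          Function.update_of_ne (by omega), Function.update_of_ne (by omega)]
    · intro j i hij
      by_cases h : j = m
      · subst h
        rw [Function.update_self]
        obtain ⟨i, rfl⟩ : ∃ i', i = i' + 1 := ⟨i - 1, by omega⟩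
        simp only [hy, coeff_C_mul, coeff_add, coeff_X_mul]
        rw [hdeg _ i (by omega), hdeg _ (i + 1) (by omega), hdeg _ (i + 1) (by omega)]
        simp
      · rw [Function.update_of_ne h]; exact hdeg j i hij
    · intro j h1 h2
      by_cases h : j = m
      · subst h
        rw [Function.update_self, show g - j = n + 1 by omega]
        simp only [hy, coeff_C_mul, coeff_add, coeff_X_mul]
        rw [hdeg (j + 3) (n + 1) (by omega), hdeg (j + 5) (n + 1) (by omega)]
        have := hlead (j + 1) (by omega) (by omega)
        rw [show g - (j + 1) = n by omega] at this
        simp only [mul_zero, add_zero]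
        have hj : (j : ℂ) + 1 ≠ 0 := by exact_mod_cast Nat.succ_ne_zero j
        exact mul_ne_zero (neg_ne_zero.mpr (inv_ne_zero hK)) (mul_ne_zero (mul_ne_zero (by norm_num) hj) this)
      · rw [Function.update_of_ne h]; exact hlead j (by omega) h2

theorem exists_coeffs (g : ℕ) (α : ℂ) :
    ∃ c : ℕ → ℂ[X], (∀ m, RecAt g α c m) ∧ (∀ j i, g < i + j → (c j).coeff i = 0) ∧
      (c 0).coeff g = 1 / 2 := by
  obtain ⟨c, h1, h2, h3⟩ := exists_coeffs_aux g α g le_rfl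
  have h0 := h3 0 (by omega) (by omega)
  rw [Nat.sub_zero] at h0
  refine ⟨fun j => C (1 / 2 * ((c 0).coeff g)⁻¹) * c j, ?_, ?_, ?_⟩
  · intro m
    have := h1 m (by omega)
    unfold RecAt at this ⊢
    linear_combination C (1 / 2 * ((c 0).coeff g)⁻¹) * this
  · intro j i hij
    rw [coeff_C_mul, h2 j i hij, mul_zero]
  · simp only [coeff_C_mul]; field_simp

theorem exists_P (g : ℕ) (α : ℂ) :
    ∃ (P : RR) (f : ℂ[X]), (derivative (derivative (derivative (derivative (derivative P))))
      + 4 * (X ^ 3 + C (C α)) * derivative (derivative (derivative P))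
      + 6 * derivative (X ^ 3 + C (C α)) * derivative (derivative P)
      + 2 * derivative (derivative (X ^ 3 + C (C α))) * derivative P
      + 4 * (C X - C (C ((g : ℂ) * (g + 1))) * X) * derivative P
      - 2 * P * derivative (C (C ((g : ℂ) * (g + 1))) * X) = 0) ∧
      4 * (C X - C (C ((g : ℂ) * (g + 1))) * X) * P ^ 2
      + 2 * P * (4 * derivative (derivative P) * (X ^ 3 + C (C α))
        + 2 * derivative P * derivative (X ^ 3 + C (C α))
        + derivative (derivative (derivative (derivative P))))
      - 4 * (X ^ 3 + C (C α)) * derivative P ^ 2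
      - 2 * derivative P * derivative (derivative (derivative P))
      + derivative (derivative P) ^ 2 = C f ∧ f.natDegree ≤ 2 * g + 1 ∧ f.coeff (2 * g + 1) = 1 := by
  obtain ⟨c, hrec, hdeg, hlead⟩ := exists_coeffs g α
  set P : RR := ∑ j ∈ range (g + 1), C (c j) * X ^ j with hP
  have hc : ∀ j, P.coeff j = c j := by
    intro j
    simp only [hP, finsetSum_coeff, coeff_C_mul, coeff_X_pow, mul_ite, mul_one, mul_zero]
    rw [Finset.sum_ite_eq]
    split_ifs with h
    · rfl
    · rw [Finset.mem_range] at h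
      ext i
      rw [hdeg j i (by omega)]; simp
  have hE : derivative (derivative (derivative (derivative (derivative P))))
      + 4 * (X ^ 3 + C (C α)) * derivative (derivative (derivative P))
      + 6 * derivative (X ^ 3 + C (C α)) * derivative (derivative P)
      + 2 * derivative (derivative (X ^ 3 + C (C α))) * derivative P
      + 4 * (C X - C (C ((g : ℂ) * (g + 1))) * X) * derivative P
      - 2 * P * derivative (C (C ((g : ℂ) * (g + 1))) * X) = 0 := by
    have e1 : derivative (X ^ 3 + C (C α) : RR) = C 3 * X ^ 2 := by
      rw [derivative_add, derivative_C, derivative_X_pow, add_zero]; norm_num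
    have e2 : derivative (C 3 * X ^ 2 : RR) = C 6 * X := by
      rw [derivative_C_mul, derivative_X_pow, ← mul_assoc, ← C_mul]; norm_num
    have e3 : derivative (C (C ((g : ℂ) * (g + 1))) * X : RR) = C (C ((g : ℂ) * (g + 1))) := by
      simp
    rw [e1, e2, e3]
    have e4 : derivative (derivative (derivative (derivative (derivative P))))
      + 4 * (X ^ 3 + C (C α)) * derivative (derivative (derivative P))
      + 6 * (C 3 * X ^ 2) * derivative (derivative P)
      + 2 * (C 6 * X) * derivative P
      + 4 * (C X - C (C ((g : ℂ) * (g + 1))) * X) * derivative P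
      - 2 * P * C (C ((g : ℂ) * (g + 1))) =
      derivative (derivative (derivative (derivative (derivative P))))
      + C 4 * (X ^ 3 * derivative (derivative (derivative P)))
      + C (4 * C α) * derivative (derivative (derivative P))
      + C 18 * (X ^ 2 * derivative (derivative P))
      + C 12 * (X ^ 1 * derivative P)
      + C (4 * X) * derivative P - C (4 * C ((g : ℂ) * (g + 1))) * (X ^ 1 * derivative P)
      - C (2 * C ((g : ℂ) * (g + 1))) * P := by
      simp only [map_mul, map_ofNat]; ring
    rw [e4]
    ext1 m
    have hm := hrec m
    unfold RecAt at hm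
    rcases m with _ | _ | _ | m
    all_goals
      simp only [coeff_add, coeff_sub, coeff_C_mul, coeff_X_pow_mul', coeff_derivative, hc, coeff_zero]
      simp only [map_mul, map_add, map_sub, map_ofNat, map_one, map_natCast, map_zero] at hm ⊢
      norm_num at hm ⊢
      try simp only [show m + 1 + 1 + 1 - 2 = m + 1 by omega, show 1 ≤ m + 1 + 1 + 1 by omega, show 2 ≤ m + 1 + 1 + 1 by omega, show 3 ≤ m + 1 + 1 + 1 by omega, if_true]
      try push_cast at hm ⊢
      ring_nf at hm ⊢
      linear_combination hm
  have hF := congrArg derivative (rfl : (4 * (C X - C (C ((g : ℂ) * (g + 1))) * X) * P ^ 2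
      + 2 * P * (4 * derivative (derivative P) * (X ^ 3 + C (C α))
        + 2 * derivative P * derivative (X ^ 3 + C (C α))
        + derivative (derivative (derivative (derivative P))))
      - 4 * (X ^ 3 + C (C α)) * derivative P ^ 2
      - 2 * derivative P * derivative (derivative (derivative P))
      + derivative (derivative P) ^ 2 : RR) = _)
  set F : RR := 4 * (C X - C (C ((g : ℂ) * (g + 1))) * X) * P ^ 2
      + 2 * P * (4 * derivative (derivative P) * (X ^ 3 + C (C α))
        + 2 * derivative P * derivative (X ^ 3 + C (C α))
        + derivative (derivative (derivative (derivative P))))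
      - 4 * (X ^ 3 + C (C α)) * derivative P ^ 2
      - 2 * derivative P * derivative (derivative (derivative P))
      + derivative (derivative P) ^ 2 with hFdef
  have hF0 : derivative F = 0 := by
    rw [hFdef]
    generalize (X ^ 3 + C (C α) : RR) = V at *
    generalize (C (C ((g : ℂ) * (g + 1))) * X : RR) = W at *
    simp only [derivative_mul, derivative_add, derivative_sub, derivative_ofNat, derivative_pow, derivative_C]
    push_cast
    simp only [map_ofNat]
    linear_combination 2 * P * hE
  have hFC : F = C (F.coeff 0) := eq_C_of_derivative_eq_zero hF0
  have hcd : ∀ j, (c j).natDegree ≤ g := by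
    intro j
    rw [natDegree_le_iff_coeff_eq_zero]
    intro i hi
    exact hdeg j i (by omega)
  have hf : F.coeff 0 = X * (4 * c 0 ^ 2) + (2 * c 0 * (8 * C α * c 2 + 24 * c 4) - 4 * C α * c 1 ^ 2
      - 12 * c 1 * c 3 + 4 * c 2 ^ 2) := by
    rw [hFdef]
    simp only [coeff_zero_eq_eval_zero, eval_add, eval_sub, eval_mul, eval_pow, eval_X, eval_C,
      eval_ofNat, derivative_add, derivative_X_pow, derivative_C, eval_zero]
    simp only [← coeff_zero_eq_eval_zero, coeff_derivative, hc]
    norm_num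
    ring
  have hd2 : ∀ i j, (c i * c j).natDegree ≤ 2 * g := by
    intro i j
    have := natDegree_mul_le (p := c i) (q := c j)
    have := hcd i
    have := hcd j
    omega
  have hrest : (2 * c 0 * (8 * C α * c 2 + 24 * c 4) - 4 * C α * c 1 ^ 2
      - 12 * c 1 * c 3 + 4 * c 2 ^ 2).natDegree ≤ 2 * g := by
    have e : 2 * c 0 * (8 * C α * c 2 + 24 * c 4) - 4 * C α * c 1 ^ 2
      - 12 * c 1 * c 3 + 4 * c 2 ^ 2 = C (16 * α) * (c 0 * c 2) + C 48 * (c 0 * c 4)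
        - C (4 * α) * (c 1 * c 1) - C 12 * (c 1 * c 3) + C 4 * (c 2 * c 2) := by
      simp only [map_mul, map_ofNat]; ring
    rw [e]
    have h : ∀ a i j, (C a * (c i * c j)).natDegree ≤ 2 * g := fun a i j =>
      (natDegree_C_mul_le _ _).trans (hd2 i j)
    have hs : ∀ {p q : ℂ[X]}, p.natDegree ≤ 2 * g → q.natDegree ≤ 2 * g →
        (p - q).natDegree ≤ 2 * g := fun hp hq => (natDegree_sub_le _ _).trans (max_le hp hq)
    exact natDegree_add_le_of_degree_le (hs (hs (natDegree_add_le_of_degree_le (h _ _ _) (h _ _ _))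
      (h _ _ _)) (h _ _ _)) (h _ _ _)
  have hmain : (4 * c 0 ^ 2 : ℂ[X]) = C 4 * (c 0 * c 0) := by simp only [map_ofNat]; ring
  refine ⟨P, F.coeff 0, hE, hFC, ?_, ?_⟩
  · rw [hf, hmain]
    refine natDegree_add_le_of_degree_le ?_ (hrest.trans (by omega))
    refine natDegree_mul_le.trans ?_
    have := (natDegree_C_mul_le 4 (c 0 * c 0)).trans (hd2 0 0)
    rw [natDegree_X]; omega
  · rw [hf, hmain, coeff_add, coeff_X_mul, coeff_C_mul, coeff_eq_zero_of_natDegree_lt (p := _ + _) (by omega),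
      two_mul, coeff_mul_add_eq_of_natDegree_le (hcd 0) (hcd 0), hlead]
    norm_num

theorem eval_mul_of_comm {A : Type*} [Ring A] (L : A) (B p : A[X])
    (h : L * B.eval L = B.eval L * L) : (p * B).eval L = p.eval L * B.eval L := by
  induction p using Polynomial.induction_on' with
  | add p q hp hq => rw [add_mul, eval_add, eval_add, add_mul, hp, hq]
  | monomial n a =>
    have hc : Commute (L ^ n) (B.eval L) := Commute.pow_left h n
    rw [← C_mul_X_pow_eq_monomial, mul_assoc, X_pow_mul, eval_C_mul, eval_mul_X_pow, eval_C_mul,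
      eval_X_pow, mul_assoc, hc.eq]

theorem mironov {A : Type*} [Ring A] [Algebra ℂ A] (u d : A) (h : d * u = u * d + 1)
    (g : ℕ) (α : ℂ) (L : A)
    (hL : L = (d ^ 2 + (u ^ 3 + algebraMap ℂ A α)) ^ 2
      + algebraMap ℂ A ((g : ℂ) * ((g : ℂ) + 1)) * u) :
    ∃ (M : A) (f : ℂ[X]), L * M = M * L ∧ M * M = aeval L f ∧ f.natDegree ≤ 2 * g + 1 ∧
      f.coeff (2 * g + 1) = 1 := by
  obtain ⟨P, f, hE, hF, hf1, hf2⟩ := exists_P g α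
  have hcomm : ∀ (p : ℂ[X]) (a : A), Commute (mapRingHom (algebraMap ℂ A) p) (C a) := by
    intro p a
    ext i
    simp only [coe_mapRingHom, coeff_mul_C, coeff_C_mul, coeff_map]
    exact Algebra.commutes _ _
  let φ : RR →+* A[X] := eval₂RingHom' (mapRingHom (algebraMap ℂ A)) (C u) (fun p => hcomm p u)
  have hφX : φ X = C u := by simp [φ, eval₂RingHom']
  have hφC : ∀ p, φ (C p) = mapRingHom (algebraMap ℂ A) p := by
    intro p; simp [φ, eval₂RingHom']
  have hdu : (C d * C u : A[X]) = C u * C d + 1 := by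
    rw [← C_mul, h, C_add, C_mul, C_1]
  have hd : ∀ q : RR, C d * φ q = φ q * C d + φ (derivative q) := by
    intro q
    induction q using Polynomial.induction_on with
    | C a => rw [derivative_C, map_zero, add_zero, hφC, (hcomm a d).eq]
    | add p q hp hq => rw [map_add, mul_add, hp, hq, derivative_add, map_add, add_mul]; abel
    | monomial n a ih =>
      rw [pow_succ, ← mul_assoc]
      generalize C a * X ^ n = p at ih ⊢
      rw [derivative_mul, derivative_X, mul_one, map_mul, map_add, map_mul,
        hφX, ← mul_assoc, ih, add_mul, mul_assoc, hdu, mul_add, mul_one, mul_assoc]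
      abel
  have hLC : C L = (C d ^ 2 + φ (X ^ 3 + C (C α))) ^ 2
      + φ (C (C ((g : ℂ) * (g + 1))) * X) := by
    rw [hL]
    simp only [map_add, map_mul, map_pow, hφX, hφC, coe_mapRingHom, map_C]
  have hz : φ (C X) = X := by rw [hφC]; simp
  set B : A[X] := φ (2 * P) * (C d ^ 2 + φ (X ^ 3 + C (C α))) - φ (2 * derivative P) * C d
    + φ (derivative (derivative P)) with hB
  have k1 := key_comm φ (C d) hd P _ _ (C X) (derivative_C) hE (C L) B hLC hB
  have k2 := key_sq φ (C d) hd P _ _ (C X) (C L) B hLC hB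
  rw [hz] at k1 k2
  have hev : ∀ p : A[X], (p * (C L - X)).eval L = 0 := by
    intro p
    rw [← neg_sub, mul_neg, eval_neg, eval_mul_X_sub_C, neg_zero]
  have hcm : L * B.eval L = B.eval L * L := by
    have e1 := congrArg (eval L) k1
    rw [hev, eval_sub, eval_C_mul] at e1
    have e2 := hev B
    rw [mul_sub, eval_sub, eval_mul_X] at e2
    rw [sub_eq_zero] at e1 e2
    rw [e1, e2]
  refine ⟨B.eval L, f, hcm, ?_, hf1, hf2⟩
  rw [← eval_mul_of_comm L B B hcm, k2, eval_add, hev, zero_add, hF, hφC, coe_mapRingHom, eval_map,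
    aeval_def]

/-- Multiplication operator. -/
noncomputable abbrev mu (p : ℂ[X]) : Module.End ℂ ℂ[X] := LinearMap.mulLeft ℂ p

/-- Differential operators of order less than `n`. -/
noncomputable def FF (n : ℕ) : Submodule ℂ (Module.End ℂ ℂ[X]) :=
  Submodule.span ℂ {T | ∃ (p : ℂ[X]) (j : ℕ), j < n ∧ T = mu p * Dop ^ j}

theorem mu_mul (p q : ℂ[X]) : mu (p * q) = mu p * mu q := by
  refine LinearMap.ext fun r => ?_
  simp [mul_assoc]

theorem D_mu (p : ℂ[X]) : Dop * mu p = mu p * Dop + mu (derivative p) := by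
  refine LinearMap.ext fun q => ?_
  simp only [Module.End.mul_apply, LinearMap.add_apply, LinearMap.mulLeft_apply, Dop, derivative_mul]
  ring

theorem FF_gen {n j : ℕ} (p : ℂ[X]) (h : j < n) : mu p * Dop ^ j ∈ FF n :=
  Submodule.subset_span ⟨p, j, h, rfl⟩

theorem FF_mono {n m : ℕ} (h : n ≤ m) : FF n ≤ FF m := by
  apply Submodule.span_mono
  rintro T ⟨p, j, hj, rfl⟩
  exact ⟨p, j, by omega, rfl⟩

theorem FF_ind {n : ℕ} {F : Module.End ℂ ℂ[X] →ₗ[ℂ] Module.End ℂ ℂ[X]}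
    {S : Submodule ℂ (Module.End ℂ ℂ[X])}
    (h : ∀ (p : ℂ[X]) (j : ℕ), j < n → F (mu p * Dop ^ j) ∈ S)
    {T : Module.End ℂ ℂ[X]} (hT : T ∈ FF n) : F T ∈ S := by
  have : FF n ≤ S.comap F := by
    apply Submodule.span_le.mpr
    rintro T ⟨p, j, hj, rfl⟩
    exact h p j hj
  exact this hT

theorem FF_mu {n : ℕ} (p : ℂ[X]) {T} (hT : T ∈ FF n) : mu p * T ∈ FF n := by
  refine FF_ind (F := LinearMap.mulLeft ℂ (mu p)) ?_ hT
  intro q j hj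
  rw [LinearMap.mulLeft_apply, ← mul_assoc, ← mu_mul]
  exact FF_gen _ hj

theorem FF_D {n : ℕ} {T} (hT : T ∈ FF n) : Dop * T ∈ FF (n + 1) := by
  refine FF_ind (F := LinearMap.mulLeft ℂ Dop) ?_ hT
  intro q j hj
  rw [LinearMap.mulLeft_apply, ← mul_assoc, D_mu, add_mul, mul_assoc, ← pow_succ']
  exact add_mem (FF_gen _ (by omega)) (FF_gen _ (by omega))

theorem FF_Dpow {n : ℕ} (m : ℕ) {T} (hT : T ∈ FF n) : Dop ^ m * T ∈ FF (n + m) := by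
  induction m with
  | zero => simpa using hT
  | succ m ih => rw [pow_succ', mul_assoc, ← add_assoc]; exact FF_D ih

theorem FF_mul_Dpow {n : ℕ} (m : ℕ) {T} (hT : T ∈ FF n) : T * Dop ^ m ∈ FF (n + m) := by
  refine FF_ind (F := LinearMap.mulRight ℂ (Dop ^ m)) ?_ hT
  intro q j hj
  rw [LinearMap.mulRight_apply, mul_assoc, ← pow_add]
  exact FF_gen _ (by omega)

theorem FF_mul {n m : ℕ} {S T} (hS : S ∈ FF n) (hT : T ∈ FF (m + 1)) : S * T ∈ FF (n + m) := by
  refine FF_ind (F := LinearMap.mulRight ℂ T) ?_ hS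
  intro q j hj
  rw [LinearMap.mulRight_apply, mul_assoc]
  exact FF_mu _ (FF_mono (by omega) (FF_Dpow j hT))

theorem Dpow_mu (m : ℕ) (p : ℂ[X]) : Dop ^ m * mu p - mu p * Dop ^ m ∈ FF m := by
  induction m with
  | zero => simp
  | succ m ih =>
    have e : Dop ^ (m + 1) * mu p - mu p * Dop ^ (m + 1) =
        Dop * (Dop ^ m * mu p - mu p * Dop ^ m) + mu (derivative p) * Dop ^ m := by
      rw [mul_sub, ← mul_assoc Dop (mu p), D_mu, pow_succ', add_mul]
      simp only [mul_assoc]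
      abel
    rw [e]
    exact add_mem (FF_D ih) (FF_gen _ (by omega))

/-- `T` has order at most `n` with coefficient `c` of `D ^ n`. -/
def Lead (T : Module.End ℂ ℂ[X]) (n : ℕ) (c : ℂ[X]) : Prop := T - mu c * Dop ^ n ∈ FF n

theorem Lead.mem {T n c} (h : Lead T n c) : T ∈ FF (n + 1) := by
  have := add_mem (FF_mono (Nat.le_succ n) h) (FF_gen c (Nat.lt_succ_self n))
  rwa [sub_add_cancel] at this

theorem Lead.mul {S T n m c e} (hS : Lead S n c) (hT : Lead T m e) : Lead (S * T) (n + m) (c * e) := by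
  have key : S * T - mu (c * e) * Dop ^ (n + m) =
      (S - mu c * Dop ^ n) * T + mu c * (Dop ^ n * (T - mu e * Dop ^ m))
        + mu c * ((Dop ^ n * mu e - mu e * Dop ^ n) * Dop ^ m) := by
    rw [mu_mul, pow_add]
    simp only [mul_sub, sub_mul, mul_assoc]
    abel
  unfold Lead
  rw [key]
  refine add_mem (add_mem (FF_mul hS hT.mem) (FF_mu _ ?_)) (FF_mu _ (FF_mul_Dpow m (Dpow_mu n e)))
  rw [add_comm n m]
  exact FF_Dpow n hT

theorem Lead.add_mem' {S T n c} (hS : Lead S n c) (hT : T ∈ FF n) : Lead (S + T) n c := by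
  unfold Lead
  rw [add_sub_right_comm]
  exact add_mem hS hT

theorem Lead.one : Lead 1 0 1 := by
  have e : (1 : Module.End ℂ ℂ[X]) - mu 1 * Dop ^ 0 = 0 := by
    refine LinearMap.ext fun q => ?_
    simp
  unfold Lead; rw [e]; exact zero_mem _

theorem Lead.pow {S n c} (hS : Lead S n c) (m : ℕ) : Lead (S ^ m) (n * m) (c ^ m) := by
  induction m with
  | zero => simpa using Lead.one
  | succ m ih => rw [pow_succ, pow_succ, Nat.mul_succ]; exact ih.mul hS

theorem mem_FF_succ {n : ℕ} {T} (hT : T ∈ FF (n + 1)) : ∃ c, Lead T n c := by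
  unfold Lead
  induction hT using Submodule.span_induction with
  | mem T h =>
    obtain ⟨p, j, hj, rfl⟩ := h
    by_cases h : j = n
    · subst h; exact ⟨p, by simp⟩
    · exact ⟨0, by simpa using FF_gen p (show j < n by omega)⟩
  | zero => exact ⟨0, by simp⟩
  | add S T _ _ hS hT =>
    obtain ⟨c, hc⟩ := hS
    obtain ⟨e, he⟩ := hT
    refine ⟨c + e, ?_⟩
    have : S + T - mu (c + e) * Dop ^ n = (S - mu c * Dop ^ n) + (T - mu e * Dop ^ n) := by
      have : mu (c + e) = mu c + mu e := by
        refine LinearMap.ext fun q => ?_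
        simp [add_mul]
      rw [this, add_mul]; abel
    rw [this]; exact add_mem hc he
  | smul a S _ hS =>
    obtain ⟨c, hc⟩ := hS
    refine ⟨a • c, ?_⟩
    have : a • S - mu (a • c) * Dop ^ n = a • (S - mu c * Dop ^ n) := by
      have : mu (a • c) = a • mu c := by
        refine LinearMap.ext fun q => ?_
        simp
      rw [this, smul_sub, smul_mul_assoc]
    rw [this]; exact Submodule.smul_mem _ _ hc

theorem FF_zero {T} (hT : T ∈ FF 0) : T = 0 := by
  have : FF 0 = ⊥ := by
    rw [FF, Submodule.span_eq_bot]
    rintro T ⟨p, j, hj, rfl⟩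
    omega
  rw [this] at hT
  simpa using hT

theorem exists_P_of_mem {n : ℕ} {T} (hT : T ∈ FF n) :
    ∃ P : ℕ → ℂ[X], T = ∑ j ∈ range n, mu (P j) * Dop ^ j := by
  induction n generalizing T with
  | zero => exact ⟨0, by simpa using FF_zero hT⟩
  | succ n ih =>
    obtain ⟨c, hc⟩ := mem_FF_succ hT
    obtain ⟨P, hP⟩ := ih hc
    refine ⟨Function.update P n c, ?_⟩
    rw [Finset.sum_range_succ, Function.update_self, ← sub_eq_iff_eq_add, hP]
    refine Finset.sum_congr rfl fun j hj => ?_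
    rw [Finset.mem_range] at hj
    rw [Function.update_of_ne (by omega)]

theorem Dpow_X (n : ℕ) : Dop ^ (n + 1) * Xop = Xop * Dop ^ (n + 1) + ((n : ℂ) + 1) • Dop ^ n := by
  have h1 : Dop * Xop = Xop * Dop + 1 := by
    have := D_mu X
    rw [derivative_X] at this
    rw [Xop, this]
    congr 1
    refine LinearMap.ext fun q => ?_
    simp
  induction n with
  | zero => simp [h1]
  | succ n ih =>
    rw [pow_succ', mul_assoc, ih, mul_add, ← mul_assoc, h1, add_mul, one_mul, mul_assoc,
      ← pow_succ', mul_smul_comm, ← pow_succ']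
    push_cast
    module

/-- Commutator with `X` lowers the order. -/
theorem FF_comm {n : ℕ} {T} (hT : T ∈ FF (n + 1)) : T * Xop - Xop * T ∈ FF n := by
  refine FF_ind (F := LinearMap.mulRight ℂ Xop - LinearMap.mulLeft ℂ Xop) ?_ hT
  intro p j hj
  rw [LinearMap.sub_apply, LinearMap.mulRight_apply, LinearMap.mulLeft_apply]
  have hc : Xop * mu p = mu p * Xop := by
    rw [Xop, ← mu_mul, ← mu_mul, mul_comm]
  rcases j with _ | j
  · simp [hc]
  · rw [mul_assoc, Dpow_X, ← mul_assoc Xop, hc, mul_add, mul_assoc, add_sub_cancel_left, mul_smul_comm]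
    exact Submodule.smul_mem _ _ (FF_gen _ (by omega))

theorem lead_zero {n : ℕ} {c} (h : Lead 0 n c) : c = 0 := by
  induction n generalizing c with
  | zero =>
    have := FF_zero h
    have := LinearMap.congr_fun this 1
    simpa using this
  | succ n ih =>
    have h2 : Lead 0 n (((n : ℂ) + 1) • c) := by
      have := FF_comm h
      have hc : Xop * mu c = mu c * Xop := by
        rw [Xop, ← mu_mul, ← mu_mul, mul_comm]
      have e : (0 - mu c * Dop ^ (n + 1)) * Xop - Xop * (0 - mu c * Dop ^ (n + 1)) =
          0 - mu (((n : ℂ) + 1) • c) * Dop ^ n := by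
        have e2 : mu (((n : ℂ) + 1) • c) = ((n : ℂ) + 1) • mu c := by
          refine LinearMap.ext fun q => ?_
          simp
        rw [sub_mul, mul_sub, zero_mul, mul_zero, mul_assoc, Dpow_X, ← mul_assoc Xop, hc, mul_add,
          mul_assoc, e2, mul_smul_comm, smul_mul_assoc]
        abel
      rw [e] at this
      exact this
    have := ih h2
    rcases smul_eq_zero.mp this with h | h
    · exact absurd h (by exact_mod_cast Nat.succ_ne_zero n)
    · exact h

theorem lead_unique {T : Module.End ℂ ℂ[X]} {n m : ℕ} {c e} (h1 : Lead T n c) (h2 : Lead T m e)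
    (hc : c ≠ 0) : n ≤ m := by
  by_contra hlt
  push Not at hlt
  apply hc
  apply lead_zero (n := n)
  have := sub_mem h1 (FF_mono (show m + 1 ≤ n by omega) h2.mem)
  unfold Lead
  rwa [sub_right_comm, sub_self] at this

theorem weyl_mem {T} (hT : T ∈ Algebra.adjoin ℂ {Dop, Xop}) : ∃ n, T ∈ FF n := by
  induction hT using Algebra.adjoin_induction with
  | mem x hx =>
    rcases hx with rfl | rfl
    · refine ⟨2, ?_⟩
      have := FF_gen (n := 2) 1 (show 1 < 2 by omega)
      rwa [mu, LinearMap.mulLeft_one, pow_one, ← Module.End.one_eq_id, one_mul] at this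
    · refine ⟨1, ?_⟩
      have := FF_gen (n := 1) X (show 0 < 1 by omega)
      rwa [pow_zero, mul_one] at this
  | algebraMap r =>
    refine ⟨1, ?_⟩
    rw [Algebra.algebraMap_eq_smul_one]
    exact Submodule.smul_mem _ _ Lead.one.mem
  | add x y _ _ hx hy =>
    obtain ⟨n, hn⟩ := hx
    obtain ⟨m, hm⟩ := hy
    exact ⟨max n m, add_mem (FF_mono (le_max_left _ _) hn) (FF_mono (le_max_right _ _) hm)⟩
  | mul x y _ _ hx hy =>
    obtain ⟨n, hn⟩ := hx
    obtain ⟨m, hm⟩ := hy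
    exact ⟨n + m, FF_mul hn (FF_mono (Nat.le_succ m) hm)⟩

theorem exists_lead {T} (hT : ∃ n, T ∈ FF n) (h0 : T ≠ 0) : ∃ n c, c ≠ 0 ∧ Lead T n c := by
  classical
  have h1 := Nat.find_spec hT
  have h2 := fun m => Nat.find_min hT (m := m)
  rcases hn : Nat.find hT with _ | n
  · rw [hn] at h1; exact absurd (FF_zero h1) h0
  · rw [hn] at h1 h2
    obtain ⟨c, hc⟩ := mem_FF_succ h1
    refine ⟨n, c, ?_, hc⟩
    rintro rfl
    apply h2 n (Nat.lt_succ_self n)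
    unfold Lead at hc
    simpa using hc

theorem lead_D : Lead Dop 1 1 := by
  unfold Lead
  rw [mu, LinearMap.mulLeft_one, pow_one, ← Module.End.one_eq_id, one_mul, sub_self]
  exact zero_mem _

theorem comm_aux {A : Type*} [Ring A] (u x : A) (h : u * x = x * u + 1) (k : ℕ) :
    (u ^ k - x) * u = u * (u ^ k - x) + 1 := by
  rw [sub_mul, mul_sub, h, (Commute.pow_left (Commute.refl u) k).eq]
  abel

/-- (Theorem 1) For `k > 1`, `g ≥ 1` and `α ≠ 0`, the operator
`L = (D^{2k} − 2X∘D^k − k·D^{k−1} + D³ + X² + α)² + g(g+1)·D` of order `4k`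
admits a commuting operator `M` of order `4kg + 2k` with polynomial
coefficients, satisfying `M² = L^{2g+1} + a_{2g}·L^{2g} + … + a₁·L + a₀`
for some constants `a₀, …, a_{2g}`; so `L` and `M` are commuting operators of
rank `2k` and genus `g`. -/
theorem mokhov_even_rank (k : ℕ) (hk : 1 < k) (g : ℕ) (hg : 1 ≤ g)
    (α : ℂ) (hα : α ≠ 0) :
    letI one : Module.End ℂ (Polynomial ℂ) := 1
    letI L : Module.End ℂ (Polynomial ℂ) :=
      (Dop ^ (2 * k) - 2 • (Xop * Dop ^ k) - (k : ℂ) • Dop ^ (k - 1)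
          + Dop ^ 3 + Xop ^ 2 + α • one) ^ 2
        + ((g : ℂ) * ((g : ℂ) + 1)) • Dop
    ∃ (M : Module.End ℂ (Polynomial ℂ)) (P : ℕ → Polynomial ℂ) (a : ℕ → ℂ),
      M = ∑ j ∈ Finset.range (4 * k * g + 2 * k + 1),
            LinearMap.mulLeft ℂ (P j) * Dop ^ j ∧
      P (4 * k * g + 2 * k) ≠ 0 ∧
      L * M = M * L ∧
      M ^ 2 = L ^ (2 * g + 1) + ∑ i ∈ Finset.range (2 * g + 1), a i • L ^ i := by
  set L : Module.End ℂ (Polynomial ℂ) :=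
      (Dop ^ (2 * k) - 2 • (Xop * Dop ^ k) - (k : ℂ) • Dop ^ (k - 1)
          + Dop ^ 3 + Xop ^ 2 + α • (1 : Module.End ℂ (Polynomial ℂ))) ^ 2
        + ((g : ℂ) * ((g : ℂ) + 1)) • Dop with hLdef
  have hXD : Dop * Xop = Xop * Dop + 1 := by simpa using Dpow_X 0
  let W := Algebra.adjoin ℂ ({Dop, Xop} : Set (Module.End ℂ ℂ[X]))
  have hDW : Dop ∈ W := Algebra.subset_adjoin (by simp)
  have hXW : Xop ∈ W := Algebra.subset_adjoin (by simp)
  let u : W := ⟨Dop, hDW⟩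
  let x : W := ⟨Xop, hXW⟩
  let d : W := u ^ k - x
  have hux : u * x = x * u + 1 := Subtype.ext hXD
  have hdu : d * u = u * d + 1 := comm_aux u x hux k
  obtain ⟨M, f, hcm, hsq, hf1, hf2⟩ := mironov u d hdu g α _ rfl
  set L' : W := (d ^ 2 + (u ^ 3 + algebraMap ℂ W α)) ^ 2
      + algebraMap ℂ W ((g : ℂ) * ((g : ℂ) + 1)) * u with hL'
  have hYY : (Dop ^ k - Xop) ^ 2 + (Dop ^ 3 + algebraMap ℂ _ α) = Dop ^ (2 * k) - 2 • (Xop * Dop ^ k)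
      - (k : ℂ) • Dop ^ (k - 1) + Dop ^ 3 + Xop ^ 2 + α • (1 : Module.End ℂ ℂ[X]) := by
    obtain ⟨n, rfl⟩ : ∃ n, k = n + 1 := ⟨k - 1, by omega⟩
    rw [pow_two (_ - _), sub_mul, mul_sub, mul_sub, Dpow_X, ← pow_add, Algebra.algebraMap_eq_smul_one,
      ← two_mul (n + 1), ← pow_two, Nat.add_sub_cancel]
    push_cast
    module
  have hLL : (L' : Module.End ℂ ℂ[X]) = L := by
    have : (L' : Module.End ℂ ℂ[X]) = ((Dop ^ k - Xop) ^ 2 + (Dop ^ 3 + algebraMap ℂ _ α)) ^ 2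
        + algebraMap ℂ _ ((g : ℂ) * ((g : ℂ) + 1)) * Dop := rfl
    rw [this, hYY, ← Algebra.smul_def]
  have hcm2 : L * (M : Module.End ℂ ℂ[X]) = M * L := by
    rw [← hLL]; exact congrArg Subtype.val hcm
  have hsq2 : (M : Module.End ℂ ℂ[X]) * M = ∑ i ∈ range (2 * g + 2), f.coeff i • L ^ i := by
    have := congrArg W.val hsq
    rw [← aeval_algHom_apply, map_mul] at this
    change (M : Module.End ℂ ℂ[X]) * M = aeval (L' : Module.End ℂ ℂ[X]) f at this
    rw [this, hLL, aeval_eq_sum_range' (show f.natDegree < 2 * g + 2 by omega)]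
  rw [sum_range_succ, hf2, one_smul, add_comm] at hsq2
  have mD : ∀ {i n : ℕ}, i < n → Dop ^ i ∈ FF n := by
    intro i n h
    have := (lead_D.pow i).mem
    exact FF_mono (by omega) this
  have hm1 : (1 : Module.End ℂ ℂ[X]) ∈ FF (2 * k) := FF_mono (by omega) Lead.one.mem
  have leadL : Lead L (4 * k) 1 := by
    have hX0 : Xop ∈ FF 1 := by
      have := FF_gen (n := 1) X (show 0 < 1 by omega)
      rwa [pow_zero, mul_one] at this
    have hX2 : Xop ^ 2 ∈ FF 1 := by
      have := FF_mu X hX0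
      rw [pow_two]; exact this
    have l1 : Lead (Dop ^ (2 * k)) (2 * k) 1 := by simpa using lead_D.pow (2 * k)
    have l2 : Lead (Dop ^ (2 * k) + (- (2 • (Xop * Dop ^ k)) + (- ((k : ℂ) • Dop ^ (k - 1)))
        + Dop ^ 3 + Xop ^ 2 + α • (1 : Module.End ℂ ℂ[X]))) (2 * k) 1 := by
      apply l1.add_mem'
      refine add_mem (add_mem (add_mem (add_mem (neg_mem (nsmul_mem ?_ 2)) (neg_mem (Submodule.smul_mem _ _ ?_))) ?_) ?_)
        (Submodule.smul_mem _ _ hm1)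
      · exact FF_gen X (by omega)
      · exact mD (by omega)
      · exact mD (by omega)
      · exact FF_mono (by omega) hX2
    have l3 := (l2.pow 2).add_mem' (T := ((g : ℂ) * ((g : ℂ) + 1)) • Dop)
      (Submodule.smul_mem _ _ (by simpa using mD (show 1 < 2 * k * 2 by omega)))
    rw [one_pow, show 2 * k * 2 = 4 * k by ring] at l3
    convert l3 using 3
    abel
  have leadM2 : Lead ((M : Module.End ℂ ℂ[X]) * M) (4 * k * (2 * g + 1)) 1 := by
    rw [hsq2]
    have l1 := leadL.pow (2 * g + 1)
    rw [one_pow] at l1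
    apply l1.add_mem'
    refine sum_mem fun i hi => Submodule.smul_mem _ _ ?_
    rw [mem_range] at hi
    refine FF_mono ?_ (leadL.pow i).mem
    have : 4 * k * (i + 1) ≤ 4 * k * (2 * g + 1) := Nat.mul_le_mul_left _ (by omega)
    rw [Nat.mul_succ] at this
    omega
  have hM0 : (M : Module.End ℂ ℂ[X]) ≠ 0 := by
    intro h
    rw [h, mul_zero] at leadM2
    exact one_ne_zero (lead_zero leadM2)
  obtain ⟨n, c, hc, hlead⟩ := exists_lead (weyl_mem M.2) hM0
  have hMM := hlead.mul hlead
  have hn1 := lead_unique hMM leadM2 (mul_ne_zero hc hc)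
  have hn2 := lead_unique leadM2 hMM one_ne_zero
  have hn : n = 4 * k * g + 2 * k := by
    have : 4 * k * (2 * g + 1) = 2 * (4 * k * g + 2 * k) := by ring
    omega
  subst hn
  obtain ⟨P, hP⟩ := exists_P_of_mem hlead
  refine ⟨M, Function.update P (4 * k * g + 2 * k) c, f.coeff, ?_, ?_, hcm2, ?_⟩
  · rw [Finset.sum_range_succ, Function.update_self, ← sub_eq_iff_eq_add, hP]
    refine Finset.sum_congr rfl fun j hj => ?_
    rw [Finset.mem_range] at hj
    rw [Function.update_of_ne (by omega)]
  · rwa [Function.update_self]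
  · rw [pow_two, hsq2]
end
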